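/- arXiv:1112.3800 — 2 statements merged into one kernel-verified Lean document; each statement's English description precedes it below -/
import Mathlib

section
/- Let n, k be natural numbers, let f : ℝⁿ → ℝ be a k-regulous function, and let g : ℝⁿ → ℝ be a function that is k-regulous on the open set D(f) = {x : f(x) ≠ 0}, i.e. g is of class C^k on D(f) and there exist real polynomials p, q in n variables with q ≠ 0 such that q(x)·g(x) = p(x) for every x ∈ D(f). Then there exists a natural number N such that the function h : ℝⁿ → ℝ defined by h(x) = f(x)^N · g(x) for x ∈ D(f) and h(x) = 0 for x ∈ Z(f) is k-regulous on ℝⁿ. -/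
open MvPolynomial

/-- A function `f : ℝⁿ → ℝ` is `k`-regulous if it is of class `C^k` on all of `ℝⁿ` and
agrees with a rational function: there are polynomials `p`, `q` with `q ≠ 0` and
`q(x) * f(x) = p(x)` for every `x`. -/
def IsRegulous (n k : ℕ) (f : (Fin n → ℝ) → ℝ) : Prop :=
  ContDiff ℝ k f ∧ ∃ p q : MvPolynomial (Fin n) ℝ, q ≠ 0 ∧
    ∀ x : Fin n → ℝ, eval x q * f x = eval x p

/-!
The heart of the matter is the case `k = 0`: on `{f ≠ 0}` the function `|g|` is at most a constant
times a power of `1 + ‖x‖² + f⁻²`, so that `f ^ N * g` tends to `0` at the zeros of `f`.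

On a hypersurface `Ψ = 0` on which the denominators are invertible, `g` is the restriction of a
polynomial `G`, and `‖x‖² + f⁻²` that of a nonnegative polynomial `Φ`. For real `s` let `w` be a
limit as `t → ∞` of the minima of the polynomials `Φ + (G - s)² + t Ψ + (2 d t)⁻¹ ∑ xᵢ ^ (2 d)`.
Their critical equations express each `xᵢ ^ (2 d - 1)` through monomials of smaller degree, hence
their critical values are integral over `ℝ[s, t]`, and the leading coefficient in `t` of an integral
equation gives a nontrivial relation `Q(s, w) = 0`. Thus a power of `w` bounds `|s|` when `w` is
large. When `w` is bounded, so is `s`: the minima are attained near `Ψ = 0` with `Φ` bounded, and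
there `G` is bounded by compactness. Finally `w ≤ Φ` at any point with `Ψ = 0` and `G = s`, which
bounds `|G|` by a power of `Φ`.

Differentiability at the zeros of `f` costs one more factor `f`, and the partial derivatives of
`f ^ (N + 1) * g` are combinations of `f ^ N * (∂ᵢf * g)` and `f ^ (N + 1) * ∂ᵢg`, which are of the
same form; induction on `k` gives the general case.
-/

open Asymptotics Filter Set Topology
open scoped Polynomial Polynomial.Bivariate

section Integrality

variable {A B σ : Type*} [CommRing A] [CommRing B] [Algebra A B]

variable (A) in
/-- The `A`-span of the monomials in the family `x` whose exponents are all less than `e`. When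
each `x i ^ e` is a combination of monomials of smaller degree, it is all of `A[x]`. -/
def reducedMonomialSpan (x : σ → B) (e : ℕ) : Submodule A B :=
  Submodule.span A ((fun α : σ →₀ ℕ => aeval x (monomial α (1 : A))) '' {α | ∀ i, α i < e})

theorem reducedMonomialSpan_fg [Finite σ] (x : σ → B) (e : ℕ) :
    (reducedMonomialSpan A x e).FG := by
  have hfinite : {α : σ →₀ ℕ | ∀ i, α i < e}.Finite :=
    (Finite.pi' fun _ => finite_Iio e).preimage DFunLike.coe_injective.injOn
  exact Submodule.fg_span (hfinite.image _)

theorem aeval_mem_reducedMonomialSpan {e : ℕ} {x : σ → B} {r : σ → MvPolynomial σ A}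
    (hdeg : ∀ i, (r i).totalDegree < e) (hx : ∀ i, x i ^ e = aeval x (r i))
    (P : MvPolynomial σ A) : aeval x P ∈ reducedMonomialSpan A x e := by
  induction hk : P.totalDegree using Nat.strong_induction_on generalizing P with
  | _ k ih =>
  rw [P.as_sum, map_sum]
  refine sum_mem fun α hα => ?_
  by_cases hreduced : ∀ i, α i < e
  · rw [← mul_one (coeff α P), ← smul_eq_mul, ← smul_monomial, map_smul]
    exact Submodule.smul_mem _ _ (Submodule.subset_span ⟨α, hreduced, rfl⟩)
  · push Not at hreduced
    obtain ⟨i, hi⟩ := hreduced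
    obtain ⟨γ, hγ⟩ := exists_add_of_le (Finsupp.single_le_iff.mpr hi)
    have hrewrite (c : A) : aeval x (monomial α c) = aeval x (r i * monomial γ c) := by
      rw [hγ, ← one_mul c, ← monomial_mul, ← X_pow_eq_monomial]
      simp [hx]
    have hlt : (r i * monomial γ (coeff α P)).totalDegree < k := calc
      _ ≤ (r i).totalDegree + γ.degree :=
        (totalDegree_mul _ _).trans (by gcongr; exact totalDegree_monomial_le _ _)
      _ < α.degree := by simpa [hγ] using hdeg i
      _ ≤ k := hk ▸ le_totalDegree hα
    rw [hrewrite]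
    exact ih _ hlt _ rfl

theorem isIntegral_aeval_of_pow_eq [Finite σ] {e : ℕ} {x : σ → B} {r : σ → MvPolynomial σ A}
    (hdeg : ∀ i, (r i).totalDegree < e) (hx : ∀ i, x i ^ e = aeval x (r i))
    (W : MvPolynomial σ A) : IsIntegral A (aeval x W) := by
  have hrange : Subalgebra.toSubmodule (aeval x : MvPolynomial σ A →ₐ[A] B).range =
      reducedMonomialSpan A x e := by
    refine le_antisymm ?_ (Submodule.span_le.mpr ?_)
    · rintro _ ⟨P, rfl⟩
      exact aeval_mem_reducedMonomialSpan hdeg hx P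
    · rintro _ ⟨α, -, rfl⟩
      exact ⟨monomial α 1, rfl⟩
  exact IsIntegral.of_mem_of_fg (aeval x : MvPolynomial σ A →ₐ[A] B).range
    (hrange ▸ reducedMonomialSpan_fg x e) _ ⟨W, rfl⟩

end Integrality

section UniversalSolution

variable {A σ : Type*} (B : Type*) [CommRing A] [CommRing B] [Finite σ]

-- Integrality in the universal solution `A[X] ⧸ (X i ^ e - r i)` yields one equation for all.
theorem exists_monic_eval₂_eq_zero_of_pow_eq {e : ℕ} {r : σ → MvPolynomial σ A}
    (hdeg : ∀ i, (r i).totalDegree < e) (W : MvPolynomial σ A) :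
    ∃ p : A[X], p.Monic ∧ ∀ (φ : A →+* B) (x : σ → B), (∀ i, x i ^ e = eval₂ φ x (r i)) →
      p.eval₂ φ (eval₂ φ x W) = 0 := by
  let I : Ideal (MvPolynomial σ A) := Ideal.span (range fun i => X i ^ e - r i)
  have hmk (P : MvPolynomial σ A) : aeval (fun i => Ideal.Quotient.mk I (X i)) P =
      Ideal.Quotient.mk I P := by
    exact (congr($(aeval_unique (Ideal.Quotient.mkₐ A I)) P)).symm
  have huniv (i : σ) : Ideal.Quotient.mk I (X i) ^ e =
      aeval (fun i => Ideal.Quotient.mk I (X i)) (r i) := by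
    rw [hmk, ← map_pow, Ideal.Quotient.mk_eq_mk_iff_sub_mem]
    exact Ideal.subset_span ⟨i, rfl⟩
  obtain ⟨p, hp, hroot⟩ := isIntegral_aeval_of_pow_eq hdeg huniv W
  refine ⟨p, hp, fun φ x hx => ?_⟩
  have hker : I ≤ RingHom.ker (eval₂Hom φ x) := by
    rw [Ideal.span_le]
    rintro _ ⟨i, rfl⟩
    simp [hx]
  have hroot' := congr(Ideal.Quotient.lift I (eval₂Hom φ x) hker $hroot)
  rw [hmk, Polynomial.hom_eval₂, map_zero] at hroot'
  convert hroot'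
  · ext a
    exact (eval₂_C φ x a).symm
  · rfl

end UniversalSolution

section CriticalValues

variable {σ : Type*} [Fintype σ]

/-- The perturbation `F + (2 d t)⁻¹ ∑ᵢ xᵢ ^ (2 d)`. For large `d` its critical equations express
each `xᵢ ^ (2 d - 1)` through monomials of smaller degree, which makes its critical values
integral over the coefficients. -/
noncomputable def coercivePerturb (t : ℝ) (d : ℕ) (F : MvPolynomial σ ℝ) : MvPolynomial σ ℝ :=
  F + C (2 * d * t)⁻¹ * ∑ i, X i ^ (2 * d)

theorem eval_coercivePerturb (t : ℝ) (d : ℕ) (F : MvPolynomial σ ℝ) (x : σ → ℝ) :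
    eval x (coercivePerturb t d F) = eval x F + (2 * d * t)⁻¹ * ∑ i, x i ^ (2 * d) := by
  simp [coercivePerturb]

theorem pderiv_coercivePerturb (t : ℝ) {d : ℕ} (hd : d ≠ 0) (F : MvPolynomial σ ℝ) (i : σ) :
    pderiv i (coercivePerturb t d F) = pderiv i F + C t⁻¹ * X i ^ (2 * d - 1) := by
  have hsum : pderiv i (∑ j : σ, X j ^ (2 * d) : MvPolynomial σ ℝ) =
      C (2 * d : ℝ) * X i ^ (2 * d - 1) := by
    rw [map_sum, Finset.sum_eq_single_of_mem i (Finset.mem_univ i)]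
    · simp [← map_ofNat C]
    · intro j _ hji
      simp [pderiv_X_of_ne hji]
  rw [coercivePerturb, map_add, pderiv_C_mul, hsum, ← mul_assoc, ← C_mul]
  congr 3
  field_simp

theorem pow_eq_of_eval_pderiv_coercivePerturb_eq_zero {t : ℝ} (ht : t ≠ 0) {d : ℕ} (hd : d ≠ 0)
    {F : MvPolynomial σ ℝ} {x : σ → ℝ} {i : σ}
    (hcrit : eval x (pderiv i (coercivePerturb t d F)) = 0) :
    x i ^ (2 * d - 1) = -(t * eval x (pderiv i F)) := by
  have hcrit' : eval x (pderiv i F) + t⁻¹ * x i ^ (2 * d - 1) = 0 := by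
    simpa [pderiv_coercivePerturb t hd] using hcrit
  field_simp at hcrit'
  linarith

theorem eval_coercivePerturb_of_critical {t : ℝ} (ht : t ≠ 0) {d : ℕ} (hd : d ≠ 0)
    {F : MvPolynomial σ ℝ} {x : σ → ℝ}
    (hcrit : ∀ i, eval x (pderiv i (coercivePerturb t d F)) = 0) :
    eval x (coercivePerturb t d F) =
      eval x F - (2 * d : ℝ)⁻¹ * ∑ i, x i * eval x (pderiv i F) := by
  have hpow (i : σ) : x i ^ (2 * d) = -t * (x i * eval x (pderiv i F)) := by
    rw [show 2 * d = 2 * d - 1 + 1 by lia, pow_succ,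
      pow_eq_of_eval_pderiv_coercivePerturb_eq_zero ht hd (hcrit i)]
    ring
  rw [eval_coercivePerturb, Finset.sum_congr rfl fun i _ => hpow i, ← Finset.mul_sum]
  field_simp
  ring

theorem exists_monic_eval₂_critical_value_eq_zero {A : Type*} [CommRing A] [Algebra ℝ A]
    (F : MvPolynomial σ A) (τ : A) :
    ∃ d ≠ 0, ∃ p : A[X], p.Monic ∧ ∀ (φ : A →ₐ[ℝ] ℝ) (x : σ → ℝ), φ τ ≠ 0 →
      (∀ i, eval x (pderiv i (coercivePerturb (φ τ) d (map φ F))) = 0) →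
      p.eval₂ φ (eval x (coercivePerturb (φ τ) d (map φ F))) = 0 := by
  let d := ∑ i, (pderiv i F).totalDegree + 1
  have hd : d ≠ 0 := by lia
  have hdeg (i : σ) : (-(C τ * pderiv i F)).totalDegree < 2 * d - 1 := calc
    _ ≤ (pderiv i F).totalDegree := by
      rw [totalDegree_neg]
      exact (totalDegree_mul _ _).trans (by simp)
    _ ≤ ∑ j, (pderiv j F).totalDegree :=
      Finset.single_le_sum (f := fun j => (pderiv j F).totalDegree) (by simp) (Finset.mem_univ i)
    _ < 2 * d - 1 := by lia
  obtain ⟨p, hp, hroot⟩ := exists_monic_eval₂_eq_zero_of_pow_eq ℝ hdeg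
    (F - C (algebraMap ℝ A (2 * d : ℝ)⁻¹) * ∑ i, X i * pderiv i F)
  refine ⟨d, hd, p, hp, fun φ x hτ hcrit => ?_⟩
  have hpderiv (i : σ) : eval x (pderiv i (map φ F)) = eval₂ φ x (pderiv i F) := by
    rw [pderiv_map, eval_map]
  have hvalue : eval x (coercivePerturb (φ τ) d (map φ F)) =
      eval₂ φ x (F - C (algebraMap ℝ A (2 * d : ℝ)⁻¹) * ∑ i, X i * pderiv i F) := by
    rw [eval_coercivePerturb_of_critical hτ hd hcrit]
    simp [hpderiv, eval_map, eval₂_sum, -map_inv₀, -mul_inv_rev]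
  rw [hvalue]
  refine hroot φ x fun i => ?_
  rw [pow_eq_of_eval_pderiv_coercivePerturb_eq_zero hτ hd (hcrit i), hpderiv]
  simp

end CriticalValues

section Penalization

variable {A B σ : Type*} [CommRing A] [CommRing B] [Algebra ℝ A] [Algebra ℝ B]

/-- The function `Φ + (G - s)² + t Ψ`. For large `t` its near-minimisers are close to minimising
`Φ + (G - s)²` near the zero set of a nonnegative `Ψ`. The parameters `s` and `t` live in an
arbitrary algebra so that they can be taken to be indeterminates. -/
noncomputable def penalized (Φ G Ψ : MvPolynomial σ ℝ) (s t : A) : MvPolynomial σ A :=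
  map (algebraMap ℝ A) Φ + (map (algebraMap ℝ A) G - C s) ^ 2 + C t * map (algebraMap ℝ A) Ψ

theorem map_penalized (φ : A →ₐ[ℝ] B) (Φ G Ψ : MvPolynomial σ ℝ) (s t : A) :
    map (φ : A →+* B) (penalized Φ G Ψ s t) = penalized Φ G Ψ (φ s) (φ t) := by
  have hmap (P : MvPolynomial σ ℝ) :
      map (φ : A →+* B) (map (algebraMap ℝ A) P) = map (algebraMap ℝ B) P := by
    rw [MvPolynomial.map_map, φ.comp_algebraMap]
  simp [penalized, hmap]

theorem eval_penalized (Φ G Ψ : MvPolynomial σ ℝ) (s t : ℝ) (x : σ → ℝ) :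
    eval x (penalized Φ G Ψ s t) = eval x Φ + (eval x G - s) ^ 2 + t * eval x Ψ := by
  simp [penalized]

theorem exists_monic_penalized_critical_value_eq_zero [Fintype σ] (Φ G Ψ : MvPolynomial σ ℝ) :
    ∃ d ≠ 0, ∃ p : ℝ[X][Y][X], p.Monic ∧ ∀ (s t : ℝ) (x : σ → ℝ), t ≠ 0 →
      (∀ i, eval x (pderiv i (coercivePerturb t d (penalized Φ G Ψ s t))) = 0) →
      p.eval₂ (Polynomial.evalEvalRingHom s t)
        (eval x (coercivePerturb t d (penalized Φ G Ψ s t))) = 0 := by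
  obtain ⟨d, hd, p, hp, hroot⟩ := exists_monic_eval₂_critical_value_eq_zero
    (penalized Φ G Ψ (Polynomial.C Polynomial.X) (Polynomial.X : ℝ[X][Y])) Polynomial.X
  refine ⟨d, hd, p, hp, fun s t x ht hcrit => ?_⟩
  have hhom : ((Polynomial.aevalAeval s t : ℝ[X][Y] →ₐ[ℝ] ℝ) : ℝ[X][Y] →+* ℝ) =
      Polynomial.evalEvalRingHom s t :=
    RingHom.ext (congr_fun (Polynomial.coe_aevalAeval_eq_evalEval s t))
  rw [← hhom]
  simpa [map_penalized, ht, hcrit] using hroot (Polynomial.aevalAeval s t) x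

end Penalization

section PolynomialRoots

theorem tendsto_eval₂ {A ι : Type*} [Semiring A] {l : Filter ι} {φ : ι → A →+* ℝ} {φ₀ : A →+* ℝ}
    (hφ : ∀ a, Tendsto (φ · a) l (𝓝 (φ₀ a))) {u : ι → ℝ} {u₀ : ℝ} (hu : Tendsto u l (𝓝 u₀))
    (p : A[X]) : Tendsto (fun i => p.eval₂ (φ i) (u i)) l (𝓝 (p.eval₂ φ₀ u₀)) := by
  simp only [Polynomial.eval₂_eq_sum_range]
  exact tendsto_finsetSum _ fun j _ => (hφ _).mul (hu.pow j)

-- The reversed polynomial has the root `t⁻¹`, which tends to `0`.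
theorem map_leadingCoeff_eq_zero_of_tendsto_atTop {A ι : Type*} [Semiring A] {l : Filter ι}
    [l.NeBot] {φ : ι → A →+* ℝ} {φ₀ : A →+* ℝ} (hφ : ∀ a, Tendsto (φ · a) l (𝓝 (φ₀ a)))
    {t : ι → ℝ} (ht : Tendsto t l atTop) {p : A[X]} (hroot : ∀ i, p.eval₂ (φ i) (t i) = 0) :
    φ₀ p.leadingCoeff = 0 := by
  have hreverse : ∀ᶠ i in l, p.reverse.eval₂ (φ i) (t i)⁻¹ = 0 := by
    filter_upwards [ht.eventually_ne_atTop 0] with i hi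
    let _ := invertibleOfNonzero hi
    simpa using (Polynomial.eval₂_reverse_eq_zero_iff (φ i) (t i) p).mpr (hroot i)
  have hlim := tendsto_eval₂ hφ (tendsto_inv_atTop_zero.comp ht) p.reverse
  simpa using tendsto_nhds_unique hlim (tendsto_const_nhds.congr' (EventuallyEq.symm hreverse))

theorem eval₂_eval₂RingHom_swap {R S : Type*} [CommSemiring R] [CommSemiring S] (f : R →+* S)
    (x y : S) (p : R[X][Y]) :
    (Polynomial.Bivariate.swap p).eval₂ (Polynomial.eval₂RingHom f x) y =
      p.eval₂ (Polynomial.eval₂RingHom f y) x := by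
  have hhom : (Polynomial.eval₂RingHom (Polynomial.eval₂RingHom f x) y).comp
      (Polynomial.Bivariate.swap (R := R) : R[X][Y] →+* R[X][Y]) =
      Polynomial.eval₂RingHom (Polynomial.eval₂RingHom f y) x := by
    ext <;> simp [Polynomial.Bivariate.swap_C_C, Polynomial.Bivariate.swap_X,
      Polynomial.Bivariate.swap_Y]
  exact congr($hhom p)

theorem evalEval_leadingCoeff_swap_eq_zero {ι : Type*} {l : Filter ι} [l.NeBot] {p : ℝ[X][Y][X]}
    {s w : ℝ} {t u : ι → ℝ} (ht : Tendsto t l atTop) (hu : Tendsto u l (𝓝 w))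
    (hroot : ∀ i, p.eval₂ (Polynomial.evalEvalRingHom s (t i)) (u i) = 0) :
    (Polynomial.Bivariate.swap p).leadingCoeff.evalEval s w = 0 := by
  refine map_leadingCoeff_eq_zero_of_tendsto_atTop (φ₀ := Polynomial.evalEvalRingHom s w)
    (φ := fun i => Polynomial.evalEvalRingHom s (u i)) (fun a => ?_) ht fun i => ?_
  · simpa [Polynomial.eval₂_evalRingHom] using
      tendsto_eval₂ (fun _ => tendsto_const_nhds (x := Polynomial.evalRingHom s _)) hu a
  · rw [Polynomial.evalEvalRingHom_eq, eval₂_eval₂RingHom_swap, ← Polynomial.evalEvalRingHom_eq]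
    exact hroot i

theorem norm_le_sum_norm_coeff_div_add_one_of_isRoot {K : Type*} [NormedField K] {p : K[X]}
    (hp : p ≠ 0) {y : K} (hy : p.IsRoot y) :
    ‖y‖ ≤ (∑ j ∈ Finset.range p.natDegree, ‖p.coeff j‖) / ‖p.leadingCoeff‖ + 1 := by
  have hbound : p.cauchyBound ≤
      (∑ j ∈ Finset.range p.natDegree, ‖p.coeff j‖₊) / ‖p.leadingCoeff‖₊ + 1 := by
    rw [Polynomial.cauchyBound]
    gcongr
    exact Finset.sup_le fun j hj => Finset.single_le_sum (f := fun j => ‖p.coeff j‖₊) (by simp) hj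
  have hle := NNReal.coe_le_coe.mpr ((hy.norm_lt_cauchyBound hp).le.trans hbound)
  push_cast at hle
  exact hle

theorem exists_abs_le_mul_pow_of_evalEval_eq_zero {q : ℝ[X][Y]} (hq : q ≠ 0) :
    ∃ (C : ℝ) (N : ℕ), ∀ᶠ x in atTop, ∀ y, q.evalEval x y = 0 → |y| ≤ C * x ^ N := by
  let N := (Finset.range q.natDegree).sup fun j => (q.coeff j).natDegree
  have hcoeff : (fun x => ∑ j ∈ Finset.range q.natDegree, ‖(q.coeff j).eval x‖) =O[atTop]
      fun x => (Polynomial.X ^ N * q.leadingCoeff).eval x := by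
    refine IsBigO.fun_sum fun j hj => isBigO_norm_left.mpr ?_
    have hdeg : (q.coeff j).natDegree ≤ N :=
      Finset.le_sup (f := fun j => (q.coeff j).natDegree) hj
    refine Polynomial.isBigO_atTop_of_degree_le _ _ ?_
    rw [Polynomial.degree_mul, Polynomial.degree_X_pow]
    exact (Polynomial.degree_le_of_natDegree_le hdeg).trans <|
      le_add_of_nonneg_right (Polynomial.zero_le_degree_iff.mpr (by simpa using hq))
  obtain ⟨C, hC⟩ := hcoeff.bound
  refine ⟨C + 1, N, ?_⟩
  filter_upwards [hC, eventually_ge_atTop 1, Polynomial.eventually_atTop_not_isRoot _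
    (Polynomial.leadingCoeff_ne_zero.mpr hq)] with x hCx hx hlead y hy
  have hdeg : (q.map (Polynomial.evalRingHom x)).natDegree = q.natDegree :=
    Polynomial.natDegree_map_of_leadingCoeff_ne_zero _ hlead
  have hlc : (q.map (Polynomial.evalRingHom x)).leadingCoeff = q.leadingCoeff.eval x :=
    Polynomial.leadingCoeff_map_of_leadingCoeff_ne_zero _ hlead
  have hne : q.map (Polynomial.evalRingHom x) ≠ 0 := by
    rw [← Polynomial.leadingCoeff_ne_zero, hlc]
    exact hlead
  have hroot : (q.map (Polynomial.evalRingHom x)).IsRoot y := by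
    rwa [Polynomial.IsRoot, Polynomial.map_evalRingHom_eval]
  have hy' := norm_le_sum_norm_coeff_div_add_one_of_isRoot hne hroot
  simp only [hlc, hdeg, Polynomial.coeff_map, Polynomial.coe_evalRingHom] at hy'
  calc
    |y| ≤ C * x ^ N + 1 := hy'.trans <| by
      gcongr
      rw [div_le_iff₀ (norm_pos_iff.mpr hlead)]
      refine (le_abs_self _).trans (hCx.trans_eq ?_)
      simp [abs_of_nonneg (zero_le_one.trans hx), mul_assoc]
    _ ≤ (C + 1) * x ^ N := by linarith [one_le_pow₀ hx (n := N)]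

end PolynomialRoots

section Minimization

variable {σ : Type*} [Fintype σ]

theorem norm_le_one_add_sum_pow {d : ℕ} (hd : d ≠ 0) (x : σ → ℝ) :
    ‖x‖ ≤ 1 + ∑ i, x i ^ (2 * d) := by
  have hnonneg (i : σ) : 0 ≤ x i ^ (2 * d) := (even_two_mul d).pow_nonneg _
  refine (pi_norm_le_iff_of_nonneg ?_).mpr fun i => ?_
  · exact add_nonneg zero_le_one (Finset.sum_nonneg fun i _ => hnonneg i)
  calc
    |x i| ≤ 1 + |x i| ^ (2 * d) := by
      rcases le_total |x i| 1 with h | h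
      · linarith [pow_nonneg (abs_nonneg (x i)) (2 * d)]
      · linarith [le_self_pow₀ h (n := 2 * d) (by lia)]
    _ = 1 + x i ^ (2 * d) := by rw [(even_two_mul d).pow_abs]
    _ ≤ 1 + ∑ j, x j ^ (2 * d) := by
      gcongr
      exact Finset.single_le_sum (f := fun j => x j ^ (2 * d)) (fun j _ => hnonneg j)
        (Finset.mem_univ i)

theorem exists_forall_eval_coercivePerturb_le {t : ℝ} (ht : 0 < t) {d : ℕ} (hd : d ≠ 0)
    {F : MvPolynomial σ ℝ} (hF : ∀ x, 0 ≤ eval x F) :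
    ∃ x, ∀ y, eval x (coercivePerturb t d F) ≤ eval y (coercivePerturb t d F) := by
  refine (continuous_eval _).exists_forall_le ?_
  have hlower : Tendsto (fun x : σ → ℝ => (2 * d * t)⁻¹ * (‖x‖ - 1)) (cocompact _) atTop :=
    (tendsto_atTop_add_const_right _ _ tendsto_norm_cocompact_atTop).const_mul_atTop
      (by have := Nat.pos_of_ne_zero hd; positivity)
  refine tendsto_atTop_mono (fun x => ?_) hlower
  rw [eval_coercivePerturb]
  refine le_add_of_nonneg_of_le (hF x) ?_
  gcongr
  linarith [norm_le_one_add_sum_pow hd x]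

end Minimization

section PolynomialDerivatives

variable {σ : Type*} [Finite σ]

theorem differentiable_eval (P : MvPolynomial σ ℝ) : Differentiable ℝ fun x => eval x P := by
  have _ := Fintype.ofFinite σ
  exact fun x => (AnalyticOnNhd.eval_mvPolynomial P x (mem_univ x)).differentiableAt

theorem fderiv_eval_single [DecidableEq σ] (P : MvPolynomial σ ℝ) (x : σ → ℝ)
    (i : σ) :
    fderiv ℝ (fun y => eval y P) x (Pi.single i 1) = eval x (pderiv i P) := by
  have _ := Fintype.ofFinite σ
  induction P using MvPolynomial.induction_on with
  | C a => simp
  | add P Q hP hQ =>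
    simp [fderiv_fun_add (differentiable_eval P x) (differentiable_eval Q x), hP, hQ]
  | mul_X P j hP =>
    simp [fderiv_fun_mul (differentiable_eval P x) (differentiableAt_apply j x), hP,
      pderiv_X, Pi.single_apply, fderiv_apply, apply_ite]

theorem eval_pderiv_eq_zero_of_forall_eval_le {P : MvPolynomial σ ℝ} {x : σ → ℝ}
    (hmin : ∀ y, eval x P ≤ eval y P) (i : σ) : eval x (pderiv i P) = 0 := by
  classical
  have _ := Fintype.ofFinite σ
  have hlocal : IsLocalMin (fun y => eval y P) x := Eventually.of_forall hmin
  rw [← fderiv_eval_single, hlocal.fderiv_eq_zero, zero_apply]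

end PolynomialDerivatives

section LimitOfMinima

variable {α : Type*} {H Ψ R : α → ℝ}

/-- The number `w` is at most the infimum of `H` on the zeros of `Ψ`, and `H` comes arbitrarily
close to `w` where `Ψ` is small. -/
def IsInfNearZeros (H Ψ : α → ℝ) (w : ℝ) : Prop :=
  (∀ y, Ψ y = 0 → w ≤ H y) ∧ ∀ δ > 0, ∀ T > w, ∃ x, Ψ x < δ ∧ H x < T

theorem exists_tendsto_minima {E : ℝ → α → ℝ} (hE : ∀ t y, E t y = H y + t * Ψ y + t⁻¹ * R y)
    (hH : ∀ x, 0 ≤ H x) (hΨ : ∀ x, 0 ≤ Ψ x) (hR : ∀ x, 0 ≤ R x) {z : α} (hz : Ψ z = 0)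
    (hmin : ∀ t > 0, ∃ x, ∀ y, E t x ≤ E t y) :
    ∃ (t : ℕ → ℝ) (x : ℕ → α) (w : ℝ), (∀ k, 0 < t k) ∧ Tendsto t atTop atTop ∧
      (∀ k y, E (t k) (x k) ≤ E (t k) y) ∧ Tendsto (fun k => E (t k) (x k)) atTop (𝓝 w) := by
  choose x hx using fun k : ℕ => hmin (k + 1) (by positivity)
  have hmem (k : ℕ) : E (k + 1) (x k) ∈ Icc 0 (H z + R z) := by
    constructor
    · rw [hE]
      have := hH (x k)
      have := hΨ (x k)
      have := hR (x k)
      positivity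
    · refine (hx k z).trans ?_
      have hinv : ((k : ℝ) + 1)⁻¹ * R z ≤ 1 * R z := by
        gcongr
        · exact hR z
        · exact inv_le_one_of_one_le₀ (by simp)
      simpa [hE, hz] using hinv
  obtain ⟨w, -, κ, hκ, hw⟩ := isCompact_Icc.tendsto_subseq hmem
  have ht : Tendsto (fun k : ℕ => (k : ℝ) + 1) atTop atTop :=
    tendsto_atTop_add_const_right _ _ tendsto_natCast_atTop_atTop
  exact ⟨fun k => κ k + 1, x ∘ κ, w, fun k => by positivity, ht.comp hκ.tendsto_atTop,
    fun k => hx (κ k), hw⟩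

theorem isInfNearZeros_of_tendsto_minima {E : ℝ → α → ℝ}
    (hE : ∀ t y, E t y = H y + t * Ψ y + t⁻¹ * R y)
    (hH : ∀ x, 0 ≤ H x) (hΨ : ∀ x, 0 ≤ Ψ x) (hR : ∀ x, 0 ≤ R x) {t : ℕ → ℝ} {x : ℕ → α} {w : ℝ}
    (ht₀ : ∀ k, 0 < t k) (ht : Tendsto t atTop atTop) (hmin : ∀ k y, E (t k) (x k) ≤ E (t k) y)
    (hw : Tendsto (fun k => E (t k) (x k)) atTop (𝓝 w)) : IsInfNearZeros H Ψ w := by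
  refine ⟨fun y hy => ?_, fun δ hδ T hT => ?_⟩
  · have hlim : Tendsto (fun k => E (t k) y) atTop (𝓝 (H y)) := by
      simpa [hE, hy] using
        ((tendsto_inv_atTop_zero.comp ht).mul_const (R y)).const_add (H y)
    exact le_of_tendsto_of_tendsto' hw hlim fun k => hmin k y
  · obtain ⟨k, hkT, hkδ⟩ :=
      ((hw.eventually_lt_const hT).and (ht.eventually_gt_atTop (T / δ))).exists
    rw [hE] at hkT
    have hpenalty : 0 ≤ t k * Ψ (x k) := mul_nonneg (ht₀ k).le (hΨ _)
    have hregular : 0 ≤ (t k)⁻¹ * R (x k) := mul_nonneg (inv_nonneg.mpr (ht₀ k).le) (hR _)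
    refine ⟨x k, ?_, by linarith⟩
    rw [div_lt_iff₀ hδ] at hkδ
    refine lt_of_mul_lt_mul_left ?_ (ht₀ k).le
    linarith [hH (x k)]

end LimitOfMinima

section AlgebraicInfimum

theorem exists_isInfNearZeros_root {σ : Type*} [Finite σ] {Φ G Ψ : MvPolynomial σ ℝ}
    (hΦ : ∀ x, 0 ≤ eval x Φ) (hΨ : ∀ x, 0 ≤ eval x Ψ) {z : σ → ℝ} (hz : eval z Ψ = 0) :
    ∃ Q : ℝ[X][Y], Q ≠ 0 ∧ ∀ s, ∃ w, Q.evalEval s w = 0 ∧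
      IsInfNearZeros (fun x => eval x Φ + (eval x G - s) ^ 2) (fun x => eval x Ψ) w := by
  have _ := Fintype.ofFinite σ
  obtain ⟨d, hd, p, hp, hroot⟩ := exists_monic_penalized_critical_value_eq_zero Φ G Ψ
  refine ⟨(Polynomial.Bivariate.swap p).leadingCoeff, by simpa using hp.ne_zero, fun s => ?_⟩
  have hE (t : ℝ) (x : σ → ℝ) : eval x (coercivePerturb t d (penalized Φ G Ψ s t)) =
      (eval x Φ + (eval x G - s) ^ 2) + t * eval x Ψ +
        t⁻¹ * ((2 * d : ℝ)⁻¹ * ∑ i, x i ^ (2 * d)) := by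
    rw [eval_coercivePerturb, eval_penalized, mul_inv]
    ring
  have hH (x : σ → ℝ) : 0 ≤ eval x Φ + (eval x G - s) ^ 2 := add_nonneg (hΦ x) (sq_nonneg _)
  have hR (x : σ → ℝ) : 0 ≤ (2 * d : ℝ)⁻¹ * ∑ i, x i ^ (2 * d) :=
    mul_nonneg (by positivity) (Finset.sum_nonneg fun i _ => (even_two_mul d).pow_nonneg _)
  obtain ⟨t, x, w, ht₀, ht, hmin, hw⟩ := exists_tendsto_minima hE hH hΨ hR hz fun t ht =>
    exists_forall_eval_coercivePerturb_le ht hd fun x => by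
      rw [eval_penalized]
      exact add_nonneg (hH x) (mul_nonneg ht.le (hΨ x))
  refine ⟨w, evalEval_leadingCoeff_swap_eq_zero ht hw fun k => ?_,
    isInfNearZeros_of_tendsto_minima hE hH hΨ hR ht₀ ht hmin hw⟩
  exact hroot s (t k) (x k) (ht₀ k).ne' (eval_pderiv_eq_zero_of_forall_eval_le (hmin k))

theorem IsInfNearZeros.abs_le {α : Type*} {Φ G Ψ : α → ℝ} {s w T δ B : ℝ}
    (hinf : IsInfNearZeros (fun x => Φ x + (G x - s) ^ 2) Ψ w) (hΦ : ∀ x, 0 ≤ Φ x) (hwT : w < T)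
    (hδ : 0 < δ) (hB : ∀ x, Ψ x < δ → Φ x ≤ T → |G x| ≤ B) : |s| ≤ B + (T + 1) := by
  obtain ⟨y, hyδ, hyT⟩ := hinf.2 δ hδ T hwT
  have hGy : |G y| ≤ B := hB y hyδ (by linarith [sq_nonneg (G y - s)])
  have hsy : |G y - s| ≤ T + 1 :=
    abs_le_of_sq_le_sq (by nlinarith [hΦ y]) (by linarith [hΦ y, sq_nonneg (G y - s)])
  linarith [abs_sub_abs_le_abs_sub s (G y), abs_sub_comm s (G y)]

theorem exists_abs_le_mul_one_add_pow {α : Type*} {Φ G Ψ : α → ℝ} (hΦ : ∀ x, 0 ≤ Φ x)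
    {Q : ℝ[X][Y]} (hQ : Q ≠ 0)
    (hinf : ∀ s, ∃ w, Q.evalEval s w = 0 ∧ IsInfNearZeros (fun x => Φ x + (G x - s) ^ 2) Ψ w)
    (hbdd : ∀ T, ∃ δ > 0, ∃ B, ∀ x, Ψ x < δ → Φ x ≤ T → |G x| ≤ B) :
    ∃ (C : ℝ) (N : ℕ), ∀ x, Ψ x = 0 → |G x| ≤ C * (1 + Φ x) ^ N := by
  obtain ⟨C, N, hC⟩ := exists_abs_le_mul_pow_of_evalEval_eq_zero
    (q := Polynomial.Bivariate.swap Q) (by simpa using hQ)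
  obtain ⟨w₀, hw₀⟩ := eventually_atTop.mp (hC.and (eventually_ge_atTop 0))
  obtain ⟨δ, hδ, B, hB⟩ := hbdd w₀
  have hw₀_nonneg : 0 ≤ w₀ := (hw₀ w₀ le_rfl).2
  refine ⟨|C| + (|B| + (w₀ + 1)), N, fun x hx => ?_⟩
  obtain ⟨w, hroot, hw_inf⟩ := hinf (G x)
  have hwΦ : w ≤ Φ x := by simpa using hw_inf.1 x hx
  rcases le_or_gt w₀ w with hw | hw
  · have hroot' : (Polynomial.Bivariate.swap Q).evalEval w (G x) = 0 := by
      rwa [← Polynomial.coe_aevalAeval_eq_evalEval, Polynomial.Bivariate.aevalAeval_swap,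
        Polynomial.coe_aevalAeval_eq_evalEval]
    have hw_nonneg : 0 ≤ w := (hw₀ w hw).2
    calc
      |G x| ≤ C * w ^ N := (hw₀ w hw).1 _ hroot'
      _ ≤ (|C| + (|B| + (w₀ + 1))) * (1 + Φ x) ^ N := by
        gcongr
        · linarith [le_abs_self C, abs_nonneg B]
        · linarith
  · calc
      |G x| ≤ B + (w₀ + 1) := hw_inf.abs_le hΦ hw hδ hB
      _ ≤ |C| + (|B| + (w₀ + 1)) := by linarith [abs_nonneg C, le_abs_self B]
      _ ≤ (|C| + (|B| + (w₀ + 1))) * (1 + Φ x) ^ N :=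
        le_mul_of_one_le_right (by positivity) (one_le_pow₀ (by linarith [hΦ x]))

end AlgebraicInfimum

section RationalFunctions

variable {σ : Type*}

/-- On `U` the function `φ` satisfies `q φ = p` for polynomials `p` and `q ≠ 0`. -/
def IsRationalOn (φ : (σ → ℝ) → ℝ) (U : Set (σ → ℝ)) : Prop :=
  ∃ p q : MvPolynomial σ ℝ, q ≠ 0 ∧ ∀ x ∈ U, eval x q * φ x = eval x p

namespace IsRationalOn

variable {φ ψ : (σ → ℝ) → ℝ} {U V : Set (σ → ℝ)}

theorem mono (hφ : IsRationalOn φ V) (hUV : U ⊆ V) : IsRationalOn φ U := by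
  obtain ⟨p, q, hq, h⟩ := hφ
  exact ⟨p, q, hq, fun x hx => h x (hUV hx)⟩

theorem mul (hφ : IsRationalOn φ U) (hψ : IsRationalOn ψ U) : IsRationalOn (φ * ψ) U := by
  obtain ⟨p, q, hq, hpq⟩ := hφ
  obtain ⟨p', q', hq', hpq'⟩ := hψ
  refine ⟨p * p', q * q', mul_ne_zero hq hq', fun x hx => ?_⟩
  rw [map_mul, map_mul, ← hpq x hx, ← hpq' x hx, Pi.mul_apply, mul_mul_mul_comm]

theorem fderiv_apply_single [Finite σ] [DecidableEq σ] (hφ : IsRationalOn φ U) (hU : IsOpen U)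
    (hdiff : DifferentiableOn ℝ φ U) (i : σ) :
    IsRationalOn (fun x => fderiv ℝ φ x (Pi.single i 1)) U := by
  have _ := Fintype.ofFinite σ
  obtain ⟨p, q, hq, hpq⟩ := hφ
  refine ⟨q * pderiv i p - p * pderiv i q, q * q, mul_ne_zero hq hq, fun x hx => ?_⟩
  have hproduct : (fun y => eval y q * φ y) =ᶠ[𝓝 x] fun y => eval y p :=
    eventually_of_mem (hU.mem_nhds hx) hpq
  have hderiv := congr($(hproduct.fderiv_eq (𝕜 := ℝ)) (Pi.single i 1))
  rw [fderiv_eval_single, fderiv_fun_mul (differentiable_eval q x)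
    (hdiff.differentiableAt (hU.mem_nhds hx))] at hderiv
  simp only [add_apply, smul_apply, smul_eq_mul, fderiv_eval_single] at hderiv
  simp only [map_sub, map_mul, ← hpq x hx, ← hderiv]
  ring

theorem pow_mul_univ (hφ : IsRationalOn φ univ) (hψ : IsRationalOn ψ {x | φ x ≠ 0}) {N : ℕ}
    (hN : N ≠ 0) : IsRationalOn (φ ^ N * ψ) univ := by
  obtain ⟨p, q, hq, hpq⟩ := hφ
  obtain ⟨p', q', hq', hpq'⟩ := hψ
  refine ⟨p ^ N * p', q ^ N * q', mul_ne_zero (pow_ne_zero N hq) hq', fun x hx => ?_⟩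
  rw [map_mul, map_mul, map_pow, map_pow, ← hpq x hx, Pi.mul_apply, Pi.pow_apply]
  by_cases hφx : φ x = 0
  · simp [hφx, hN]
  · rw [← hpq' x hφx]
    ring

end IsRationalOn

theorem dense_eval_ne_zero [Finite σ] {q : MvPolynomial σ ℝ} (hq : q ≠ 0) :
    Dense {x | eval x q ≠ 0} := by
  have _ := Fintype.ofFinite σ
  refine Metric.dense_iff.mpr fun x r hr => ?_
  by_contra hempty
  refine hq (funext_set (fun i => Metric.ball (x i) r) (fun i => ?_) fun y hy => ?_)
  · rw [Real.ball_eq_Ioo]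
    exact Ioo_infinite (by linarith)
  · rw [← ball_pi x hr] at hy
    by_contra hne
    exact hempty ⟨y, hy, by simpa using hne⟩

end RationalFunctions

section ClearedDenominators

variable {σ : Type*}

/-- The polynomial `z a(y)` in the variables `y` and the extra variable `z = X none`. It represents
the fraction `a / D` on the hypersurface `z D(y) = 1`. -/
noncomputable def liftFrac (a : MvPolynomial σ ℝ) : MvPolynomial (Option σ) ℝ :=
  X none * rename some a

theorem eval_liftFrac (a : MvPolynomial σ ℝ) (x : Option σ → ℝ) :
    eval x (liftFrac a) = x none * eval (x ∘ some) a := by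
  simp [liftFrac, eval_rename]

theorem values_of_eval_liftFrac_ne_zero {f g : (σ → ℝ) → ℝ} {p q p' q' : MvPolynomial σ ℝ}
    (hf : ∀ y, eval y q * f y = eval y p) (hg : ∀ y, f y ≠ 0 → eval y q' * g y = eval y p')
    {x : Option σ → ℝ} (hx : eval x (liftFrac (p * q * q')) ≠ 0) :
    f (x ∘ some) ≠ 0 ∧
      f (x ∘ some) * eval x (liftFrac (q * q * q')) = eval x (liftFrac (p * q * q')) ∧
      eval x (liftFrac (p' * p * q)) = eval x (liftFrac (p * q * q')) * g (x ∘ some) := by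
  have hfx : f (x ∘ some) ≠ 0 := by
    rintro hzero
    simp [eval_liftFrac, ← hf, hzero] at hx
  refine ⟨hfx, ?_, ?_⟩
  · simp only [eval_liftFrac, map_mul, ← hf]
    ring
  · simp only [eval_liftFrac, map_mul, ← hg _ hfx]
    ring

variable [Fintype σ] {f g : (σ → ℝ) → ℝ}

theorem exists_abs_le_of_sum_sq_le (hf : Continuous f) (hg : ContinuousOn g {x | f x ≠ 0})
    (T : ℝ) : ∃ B, ∀ y, ∑ i, y i ^ 2 ≤ T → 1 / 4 ≤ T * f y ^ 2 → |g y| ≤ B := by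
  let K : Set (σ → ℝ) := {y | ∑ i, y i ^ 2 ≤ T} ∩ {y | 1 / 4 ≤ T * f y ^ 2}
  have hclosed : IsClosed K :=
    (isClosed_le (by fun_prop) continuous_const).inter (isClosed_le continuous_const (by fun_prop))
  have hbounded : Bornology.IsBounded K := by
    refine (Metric.isBounded_closedBall (x := 0) (r := 1 + T)).subset fun y hy => ?_
    rw [mem_closedBall_zero_iff]
    exact (norm_le_one_add_sum_pow one_ne_zero y).trans (by simpa using hy.1)
  have hsub : K ⊆ {x | f x ≠ 0} := by
    rintro y ⟨-, hy⟩ hzero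
    norm_num [hzero] at hy
  obtain ⟨B, hB⟩ := (Metric.isCompact_of_isClosed_isBounded hclosed
    hbounded).exists_bound_of_continuousOn (hg.mono hsub)
  exact ⟨B, fun y hyT hyf => hB y ⟨hyT, hyf⟩⟩

theorem exists_abs_eval_liftFrac_le {p q p' q' : MvPolynomial σ ℝ} (hf : Continuous f)
    (hg : ContinuousOn g {x | f x ≠ 0}) (hfrat : ∀ y, eval y q * f y = eval y p)
    (hgrat : ∀ y, f y ≠ 0 → eval y q' * g y = eval y p') (T : ℝ) :
    ∃ B, ∀ x : Option σ → ℝ, (eval x (liftFrac (p * q * q')) - 1) ^ 2 < 1 / 4 →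
      ∑ i, x (some i) ^ 2 + eval x (liftFrac (q * q * q')) ^ 2 ≤ T →
      |eval x (liftFrac (p' * p * q))| ≤ B := by
  obtain ⟨B, hB⟩ := exists_abs_le_of_sum_sq_le hf hg T
  refine ⟨3 / 2 * B, fun x hx hT => ?_⟩
  set u := eval x (liftFrac (p * q * q'))
  obtain ⟨hlower, hupper⟩ : -(1 / 2) < u - 1 ∧ u - 1 < 1 / 2 := abs_lt_of_sq_lt_sq'
    (by linarith) (by norm_num)
  obtain ⟨-, hv, hgx⟩ := values_of_eval_liftFrac_ne_zero hfrat hgrat (x := x)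
    (show u ≠ 0 by linarith)
  have hsum : 0 ≤ ∑ i, x (some i) ^ 2 := by positivity
  have hfx : 1 / 4 ≤ T * f (x ∘ some) ^ 2 := calc
    1 / 4 ≤ u ^ 2 := by nlinarith
    _ = eval x (liftFrac (q * q * q')) ^ 2 * f (x ∘ some) ^ 2 := by rw [← mul_pow, mul_comm, hv]
    _ ≤ T * f (x ∘ some) ^ 2 := by gcongr; linarith
  rw [hgx, abs_mul, abs_of_pos (by linarith)]
  gcongr
  · linarith
  · exact hB _ (by simpa using le_of_add_le_of_nonneg_left hT (sq_nonneg _)) hfx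

theorem exists_abs_le_of_eval_ne_zero {p q p' q' : MvPolynomial σ ℝ} (hf : Continuous f)
    (hg : ContinuousOn g {x | f x ≠ 0}) (hfrat : ∀ y, eval y q * f y = eval y p)
    (hgrat : ∀ y, f y ≠ 0 → eval y q' * g y = eval y p') :
    ∃ (C : ℝ) (N : ℕ), ∀ y, eval y (p * q * q') ≠ 0 →
      |g y| ≤ C * (1 + (∑ i, y i ^ 2 + (f y)⁻¹ ^ 2)) ^ N := by
  let Φ : MvPolynomial (Option σ) ℝ :=
    ∑ i, X (some i) ^ 2 + liftFrac (q * q * q') ^ 2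
  have hΦ (x : Option σ → ℝ) : eval x Φ =
      ∑ i, x (some i) ^ 2 + eval x (liftFrac (q * q * q')) ^ 2 := by
    simp [Φ]
  let Ψ : MvPolynomial (Option σ) ℝ := (liftFrac (p * q * q') - 1) ^ 2
  have hΨ (x : Option σ → ℝ) : eval x Ψ = (eval x (liftFrac (p * q * q')) - 1) ^ 2 := by
    simp [Ψ]
  let liftPoint (y : σ → ℝ) : Option σ → ℝ := fun o => o.elim (eval y (p * q * q'))⁻¹ y
  have hlift {y : σ → ℝ} (hy : eval y (p * q * q') ≠ 0) :
      eval (liftPoint y) (liftFrac (p * q * q')) = 1 := by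
    rw [eval_liftFrac]
    exact inv_mul_cancel₀ hy
  by_cases hempty : ∀ y, eval y (p * q * q') = 0
  · exact ⟨0, 0, fun y hy => absurd (hempty y) hy⟩
  push Not at hempty
  obtain ⟨z, hz⟩ := hempty
  have hΦ_nonneg (x : Option σ → ℝ) : 0 ≤ eval x Φ := by
    rw [hΦ]
    positivity
  obtain ⟨Q, hQ, hinf⟩ := exists_isInfNearZeros_root (G := liftFrac (p' * p * q)) (Ψ := Ψ)
    hΦ_nonneg (fun x => by rw [hΨ]; positivity) (z := liftPoint z) (by rw [hΨ, hlift hz]; simp)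
  obtain ⟨C, N, hC⟩ := exists_abs_le_mul_one_add_pow hΦ_nonneg hQ hinf fun T => by
    obtain ⟨B, hB⟩ := exists_abs_eval_liftFrac_le hf hg hfrat hgrat T
    exact ⟨1 / 4, by norm_num, B, fun x => by simpa only [hΦ, hΨ] using hB x⟩
  refine ⟨C, N, fun y hy => ?_⟩
  obtain ⟨-, hv, hgy⟩ := values_of_eval_liftFrac_ne_zero hfrat hgrat (x := liftPoint y)
    (by simp [hlift hy])
  rw [hlift hy] at hv hgy
  have hbound := hC (liftPoint y) (by rw [hΨ, hlift hy]; simp)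
  rwa [hgy, one_mul, hΦ, eq_inv_of_mul_eq_one_right hv] at hbound

theorem IsRationalOn.exists_abs_le_mul_pow (hfrat : IsRationalOn f univ)
    (hgrat : IsRationalOn g {x | f x ≠ 0}) (hf : Continuous f)
    (hg : ContinuousOn g {x | f x ≠ 0}) :
    ∃ (C : ℝ) (N : ℕ), ∀ y, f y ≠ 0 →
      |g y| ≤ C * (1 + (∑ i, y i ^ 2 + (f y)⁻¹ ^ 2)) ^ N := by
  obtain ⟨p, q, hq, hpq⟩ := hfrat
  obtain ⟨p', q', hq', hpq'⟩ := hgrat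
  obtain ⟨C, N, hC⟩ :=
    exists_abs_le_of_eval_ne_zero hf hg (fun y => hpq y (mem_univ y)) hpq'
  refine ⟨C, N, fun y hy => ?_⟩
  have hp : p ≠ 0 := by
    rintro rfl
    have hzero : f = 0 := hf.ext_on (dense_eval_ne_zero hq) continuous_const fun x hx => by
      simpa [show eval x q ≠ 0 from hx] using hpq x (mem_univ x)
    exact hy congr($hzero y)
  have hdense : Dense {x | eval x (p * q * q') ≠ 0} :=
    dense_eval_ne_zero (mul_ne_zero (mul_ne_zero hp hq) hq')
  have hgy : ContinuousAt g y := hg.continuousAt ((isOpen_ne_fun hf continuous_const).mem_nhds hy)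
  have hsum : Continuous fun y : σ → ℝ => ∑ i, y i ^ 2 := by fun_prop
  have hbound : ContinuousAt (fun y => C * (1 + (∑ i, y i ^ 2 + (f y)⁻¹ ^ 2)) ^ N) y :=
    (((hsum.continuousAt.add ((hf.continuousAt.inv₀ hy).pow 2)).const_add 1).pow N).const_mul C
  exact ContinuousWithinAt.closure_le (hdense y) hgy.abs.continuousWithinAt
    hbound.continuousWithinAt hC

end ClearedDenominators

section ExtensionByZero

variable {σ : Type*} [Finite σ] {f g : (σ → ℝ) → ℝ}

theorem IsRationalOn.eventually_tendsto_pow_mul (hfrat : IsRationalOn f univ)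
    (hgrat : IsRationalOn g {x | f x ≠ 0}) (hf : Continuous f)
    (hg : ContinuousOn g {x | f x ≠ 0}) :
    ∀ᶠ N in atTop, ∀ x, f x = 0 → Tendsto (f ^ N * g) (𝓝 x) (𝓝 0) := by
  have _ := Fintype.ofFinite σ
  obtain ⟨C, M, hC⟩ := hfrat.exists_abs_le_mul_pow hgrat hf hg
  filter_upwards [eventually_gt_atTop (2 * M)] with N hN x hx
  obtain ⟨k, rfl⟩ := Nat.exists_eq_add_of_lt hN
  have hlim : Tendsto (fun y => |f y| ^ (k + 1) * (C * (f y ^ 2 * (1 + ∑ i, y i ^ 2) + 1) ^ M))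
      (𝓝 x) (𝓝 0) := by
    have hcont : Continuous
        fun y => |f y| ^ (k + 1) * (C * (f y ^ 2 * (1 + ∑ i, y i ^ 2) + 1) ^ M) := by
      fun_prop
    simpa [hx] using hcont.tendsto x
  refine squeeze_zero_norm (fun y => ?_) hlim
  by_cases hy : f y = 0
  · simp [hy]
  calc
    ‖f y ^ (2 * M + k + 1) * g y‖ = |f y| ^ (k + 1) * ((f y ^ 2) ^ M * |g y|) := by
      rw [norm_mul, norm_pow, Real.norm_eq_abs, Real.norm_eq_abs, ← sq_abs (f y)]
      ring
    _ ≤ |f y| ^ (k + 1) *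
        ((f y ^ 2) ^ M * (C * (1 + (∑ i, y i ^ 2 + (f y)⁻¹ ^ 2)) ^ M)) := by
      gcongr
      exact hC y hy
    _ = |f y| ^ (k + 1) * (C * (f y ^ 2 * (1 + ∑ i, y i ^ 2) + 1) ^ M) := by
      rw [mul_left_comm _ C, ← mul_pow]
      congr 4
      field_simp
      ring

theorem IsRationalOn.eventually_continuous_pow_mul (hfrat : IsRationalOn f univ)
    (hgrat : IsRationalOn g {x | f x ≠ 0}) (hf : Continuous f)
    (hg : ContinuousOn g {x | f x ≠ 0}) : ∀ᶠ N in atTop, Continuous (f ^ N * g) := by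
  filter_upwards [hfrat.eventually_tendsto_pow_mul hgrat hf hg, eventually_ne_atTop 0]
    with N hlim hN
  refine continuous_iff_continuousAt.mpr fun x => ?_
  by_cases hx : f x = 0
  · simpa [ContinuousAt, hx, hN] using hlim x hx
  · exact (hf.continuousAt.pow N).mul
      (hg.continuousAt ((isOpen_ne_fun hf continuous_const).mem_nhds hx))

end ExtensionByZero

section Derivatives

variable {E : Type*} [NormedAddCommGroup E] [NormedSpace ℝ E] {f g : E → ℝ}

theorem hasFDerivAt_pow_succ_mul_of_eq_zero {x : E} (hf : DifferentiableAt ℝ f x) (hx : f x = 0)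
    {N : ℕ} (hlim : Tendsto (f ^ N * g) (𝓝 x) (𝓝 0)) :
    HasFDerivAt (f ^ (N + 1) * g) (0 : E →L[ℝ] ℝ) x := by
  have hf_bigO : f =O[𝓝 x] fun y => y - x := by simpa [hx] using hf.isBigO_sub
  have hprod : (fun y => f y * (f ^ N * g) y) =o[𝓝 x] fun y => ‖y - x‖ * (1 : ℝ) :=
    hf_bigO.norm_right.mul_isLittleO ((isLittleO_one_iff ℝ).mpr hlim)
  refine HasFDerivAt.of_isLittleO ?_
  simpa [hx, pow_succ', mul_assoc] using hprod

theorem hasFDerivAt_pow_mul (hf : Differentiable ℝ f) (hg : DifferentiableOn ℝ g {x | f x ≠ 0})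
    {N : ℕ} (hlim : ∀ x, f x = 0 → Tendsto (f ^ N * g) (𝓝 x) (𝓝 0)) (hN : N ≠ 0) (x : E) :
    HasFDerivAt (f ^ (N + 1) * g)
      (f x ^ (N + 1) • fderiv ℝ g x + ((N + 1) * f x ^ N * g x) • fderiv ℝ f x) x := by
  by_cases hx : f x = 0
  · simpa [hx, hN] using hasFDerivAt_pow_succ_mul_of_eq_zero (hf x) hx (hlim x hx)
  · have hgx : DifferentiableAt ℝ g x := hg.differentiableAt
      ((isOpen_ne_fun hf.continuous continuous_const).mem_nhds hx)
    refine (((hf x).hasFDerivAt.pow (N + 1)).mul hgx.hasFDerivAt).congr_fderiv ?_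
    ext v
    simp only [add_tsub_cancel_right, nsmul_eq_mul, Nat.cast_add, Nat.cast_one, add_apply,
      smul_apply, smul_eq_mul, add_right_inj]
    ring

theorem contDiff_succ_of_fderiv_apply_basis {ι F : Type*} [Finite ι] [NormedAddCommGroup F]
    [NormedSpace ℝ F] (b : Module.Basis ι ℝ E) {k : ℕ} {h : E → F} (hdiff : Differentiable ℝ h)
    (hpartial : ∀ i, ContDiff ℝ k fun x => fderiv ℝ h x (b i)) : ContDiff ℝ (k + 1) h := by
  have _ := Fintype.ofFinite ι
  have _ : FiniteDimensional ℝ E := b.finiteDimensional_of_finite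
  refine contDiff_succ_iff_fderiv_apply.mpr ⟨hdiff, by simp, fun v => ?_⟩
  have hsum (x : E) : fderiv ℝ h x v = ∑ i, b.repr v i • fderiv ℝ h x (b i) := by
    conv_lhs => rw [← b.sum_repr v, map_sum]
    simp only [map_smul]
  simp only [hsum]
  exact ContDiff.sum fun i _ => (hpartial i).const_smul _

end Derivatives

section Smoothness

variable {σ : Type*} [Fintype σ] {f g : (σ → ℝ) → ℝ}

theorem IsRationalOn.eventually_contDiff_pow_mul (hfrat : IsRationalOn f univ) {k : ℕ}
    (hf : ContDiff ℝ k f) (hg : ContDiffOn ℝ k g {x | f x ≠ 0})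
    (hgrat : IsRationalOn g {x | f x ≠ 0}) : ∀ᶠ N in atTop, ContDiff ℝ k (f ^ N * g) := by
  classical
  have hopen : IsOpen {x | f x ≠ 0} := isOpen_ne_fun hf.continuous continuous_const
  induction k generalizing g with
  | zero =>
    simpa [contDiff_zero] using
      hfrat.eventually_continuous_pow_mul hgrat hf.continuous hg.continuousOn
  | succ k ih =>
    push_cast at hf hg ⊢
    have hfdiff : Differentiable ℝ f := hf.differentiable (by simp)
    have hgdiff : DifferentiableOn ℝ g {x | f x ≠ 0} := hg.differentiableOn (by simp)
    have hfpartial (i : σ) : ∀ᶠ N in atTop,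
        ContDiff ℝ k (f ^ N * ((fun x => fderiv ℝ f x (Pi.single i 1)) * g)) := by
      refine ih (hf.of_le (by simp)) (ContDiffOn.mul ?_ (hg.of_le (by simp))) ?_
      · exact ((hf.fderiv_right le_rfl).clm_apply contDiff_const).contDiffOn
      · exact ((hfrat.fderiv_apply_single isOpen_univ hfdiff.differentiableOn i).mono
          (subset_univ _)).mul hgrat
    have hgpartial (i : σ) : ∀ᶠ N in atTop,
        ContDiff ℝ k (f ^ N * fun x => fderiv ℝ g x (Pi.single i 1)) :=
      ih (hf.of_le (by simp)) ((hg.fderiv_of_isOpen hopen le_rfl).clm_apply contDiffOn_const)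
        (hgrat.fderiv_apply_single hopen hgdiff i)
    rw [← map_add_atTop_eq_nat 1, eventually_map]
    filter_upwards [eventually_all.mpr hfpartial,
      (tendsto_add_atTop_nat 1).eventually (eventually_all.mpr hgpartial),
      hfrat.eventually_tendsto_pow_mul hgrat hf.continuous hg.continuousOn,
      eventually_ne_atTop 0] with N hfN hgN hlim hN
    have hderiv := hasFDerivAt_pow_mul hfdiff hgdiff hlim hN
    refine contDiff_succ_of_fderiv_apply_basis (Pi.basisFun ℝ σ)
      (fun x => (hderiv x).differentiableAt) fun i => ?_
    convert (hgN i).add ((hfN i).const_smul (N + 1 : ℝ)) using 1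
    ext x
    rw [(hderiv x).fderiv]
    simp only [Pi.basisFun_apply, add_apply, smul_apply, smul_eq_mul, Pi.mul_apply, Pi.pow_apply,
      add_right_inj]
    ring

end Smoothness

/-- **Regulous functions, Lemme `LojaregulRn` (regulous Łojasiewicz inequality)**:
if `f` is `k`-regulous on `ℝⁿ` and `g` is `k`-regulous on `D(f) = {x | f x ≠ 0}`, then for
some natural number `N` the extension by `0` of `f^N · g` across `Z(f)` is `k`-regulous
on all of `ℝⁿ`. -/
theorem lojasiewicz_regulous (n k : ℕ) (f g : (Fin n → ℝ) → ℝ)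
    (hf : IsRegulous n k f)
    (hg : ContDiffOn ℝ k g {x : Fin n → ℝ | f x ≠ 0})
    (hgrat : ∃ p q : MvPolynomial (Fin n) ℝ, q ≠ 0 ∧
      ∀ x : Fin n → ℝ, f x ≠ 0 → eval x q * g x = eval x p) :
    ∃ N : ℕ, IsRegulous n k (fun x => if f x = 0 then 0 else f x ^ N * g x) := by
  obtain ⟨hfsmooth, p, q, hq, hpq⟩ := hf
  have hfrat : IsRationalOn f univ := ⟨p, q, hq, fun x _ => hpq x⟩
  obtain ⟨N, hsmooth, hN⟩ :=
    ((hfrat.eventually_contDiff_pow_mul hfsmooth hg hgrat).and (eventually_ne_atTop 0)).exists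
  have hext : (fun x => if f x = 0 then 0 else f x ^ N * g x) = f ^ N * g := by
    ext x
    split_ifs with hx <;> simp [hx, hN]
  obtain ⟨P, Q, hQ, hPQ⟩ := hfrat.pow_mul_univ hgrat hN
  refine ⟨N, ?_⟩
  rw [hext]
  exact ⟨hsmooth, P, Q, hQ, fun x => hPQ x (mem_univ x)⟩
end

section
/- Let n, k be natural numbers. The ring R^k(ℝⁿ) is radically principal: for every ideal I of R^k(ℝⁿ) there exists a k-regulous function f ∈ I such that Z(f) = Z(I) and the radical of the principal ideal (f) equals the radical of I, where Z(I) = ⋂_{g ∈ I} Z(g). -/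
/-!
A Łojasiewicz inequality makes radicals geometric: if `f` and `g` are regulous and `Z(f) ⊆ Z(g)`,
then `|g| ^ N ≤ |f|` near `Z(f)` for some `N`, so for a larger exponent `g ^ M / f`, extended by
`0`, is of class `C^k`, hence regulous, and `f ∣ g ^ M`. To find `N`, consider, after clearing
denominators, the polynomial `(T f)² + g⁻² + |y|² - u`. Its nonzero critical values are roots of
a polynomial `P` over `ℝ[u, T]` with `P(0) ≠ 0`; for `T ≥ u ^ N` with `N` and `u` large the
constant term of `P` does not vanish, so the minimum over `y` cannot cross `0` as `T` decreases
from `∞` to `u ^ N`. Taking `u` slightly larger than `g⁻² + |y|²` gives the inequality.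

It remains to see that the zero set of any ideal is that of finitely many of its members, whose
sum of squares is then the generator `f`. By Noetherian induction it suffices to do so on `Z(J)`
with `J` prime, where every regulous function can be written `p / q` with `q ∉ J`. If some member of
the ideal has `p ∉ J`, then `Z(J)` may be replaced by `Z(J) ∩ Z(p)`. Otherwise every member vanishes
on the limits of points of `Z(J)` where its `q ≠ 0`, and for all members alike these fill `Z(J)`
outside a single `Z(q₀)` with `q₀ ∉ J`.
-/

open MvPolynomial

/-- The ring `R^k(ℝⁿ)` of `k`-regulous functions, as a subring of the ring of all
functions `ℝⁿ → ℝ` with pointwise operations. -/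
def regulousRing (n k : ℕ) : Subring ((Fin n → ℝ) → ℝ) where
  carrier := {f | IsRegulous n k f}
  one_mem' := ⟨contDiff_const, 1, 1, one_ne_zero, by simp⟩
  zero_mem' := ⟨contDiff_const, 0, 1, one_ne_zero, by simp⟩
  mul_mem' := by
    rintro f g ⟨hf, p₁, q₁, hq₁, h₁⟩ ⟨hg, p₂, q₂, hq₂, h₂⟩
    refine ⟨hf.mul hg, p₁ * p₂, q₁ * q₂, mul_ne_zero hq₁ hq₂, fun x => ?_⟩
    simp only [eval_mul, Pi.mul_apply]
    linear_combination (eval x q₂ * g x) * h₁ x + eval x p₁ * h₂ x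
  add_mem' := by
    rintro f g ⟨hf, p₁, q₁, hq₁, h₁⟩ ⟨hg, p₂, q₂, hq₂, h₂⟩
    refine ⟨hf.add hg, p₁ * q₂ + p₂ * q₁, q₁ * q₂, mul_ne_zero hq₁ hq₂, fun x => ?_⟩
    simp only [eval_mul, eval_add, Pi.add_apply]
    linear_combination (eval x q₂) * h₁ x + (eval x q₁) * h₂ x
  neg_mem' := by
    rintro f ⟨hf, p, q, hq, h⟩
    refine ⟨hf.neg, -p, q, hq, fun x => ?_⟩
    simp only [map_neg, Pi.neg_apply]
    linear_combination -(h x)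

/-! ### Critical values of polynomials -/

open Polynomial in
lemma kaehlerDifferential_D_ne_zero_of_transcendental {R L : Type*} [CommRing R] [CharZero R]
    [Field L] [Algebra R L] {w : L} (hw : Transcendental R w) :
    KaehlerDifferential.D R L w ≠ 0 := by
  have hinj : Function.Injective (Polynomial.aeval (R := R) w) :=
    transcendental_iff_injective.mp hw
  have : IsDomain R[X] := hinj.isDomain (Polynomial.aeval (R := R) w).toRingHom
  let : Algebra R[X] L := (Polynomial.aeval (R := R) w).toAlgebra
  have : IsScalarTower R R[X] L := .of_algHom (Polynomial.aeval (R := R) w)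
  have : FaithfulSMul R[X] L := (faithfulSMul_iff_algebraMap_injective _ _).mpr hinj
  let : Algebra (FractionRing R[X]) L := FractionRing.liftAlgebra R[X] L
  have : CharZero L := charZero_of_injective_ringHom (f := (Polynomial.aeval w).toRingHom.comp C)
    (hinj.comp C_injective)
  have : CharZero (FractionRing R[X]) := (algebraMap (FractionRing R[X]) L).charZero
  obtain ⟨s, hs⟩ := exists_isTranscendenceBasis (FractionRing R[X]) L
  have : Algebra.IsAlgebraic
      (IntermediateField.adjoin (FractionRing R[X]) (Set.range ((↑) : s → L))) L :=
    hs.isAlgebraic_field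
  have : Algebra.FormallySmooth (FractionRing R[X]) L :=
    .of_algebraicIndependent_of_isSeparable hs.1
  have : Algebra.FormallySmooth R[X] (FractionRing R[X]) := .of_isLocalization (nonZeroDivisors _)
  have : Algebra.FormallySmooth R[X] L := .comp _ (FractionRing R[X]) _
  -- Formal smoothness makes `L ⊗ Ω[R[X]⁄R] → Ω[L⁄R]` injective, so the image of `dX` survives.
  have hmap : Function.Injective (KaehlerDifferential.mapBaseChange R R[X] L) := by
    rw [injective_iff_map_eq_zero]
    intro x hx
    obtain ⟨y, rfl⟩ := (Algebra.H1Cotangent.exact_δ_mapBaseChange R R[X] L x).mp hx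
    rw [Subsingleton.elim y 0, map_zero]
  have hX : (1 : L) ⊗ₜ[R[X]] KaehlerDifferential.D R R[X] X ≠ 0 := by
    intro h
    have := congrArg (TensorProduct.rid R[X] L ∘
      (KaehlerDifferential.polynomialEquiv R).toLinearMap.lTensor L) h
    simp at this
  intro hD
  apply hX
  apply hmap
  rw [map_zero, KaehlerDifferential.mapBaseChange_tmul, one_smul, KaehlerDifferential.map_D]
  rw [RingHom.algebraMap_toAlgebra]
  simpa using hD

lemma kaehlerDifferential_D_aeval_eq_zero {σ R A : Type*} [CommRing R] [CommRing A] [Algebra R A]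
    (y : σ → A) (F : MvPolynomial σ R) (h : ∀ i, aeval y (pderiv i F) = 0) :
    KaehlerDifferential.D R A (aeval y F) = 0 := by
  let _ : Algebra (MvPolynomial σ R) A := (aeval y).toAlgebra
  have : IsScalarTower R (MvPolynomial σ R) A := .of_algHom (aeval y)
  have hD := (KaehlerDifferential.mvPolynomialBasis R σ).linearCombination_repr
    (KaehlerDifferential.D R (MvPolynomial σ R) F)
  have := congrArg (KaehlerDifferential.map R R (MvPolynomial σ R) A) hD
  rw [KaehlerDifferential.map_D] at this
  refine this.symm.trans ?_
  rw [Finsupp.linearCombination_apply, map_finsuppSum]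
  refine Finset.sum_eq_zero fun i _ => ?_
  simp only [KaehlerDifferential.mvPolynomialBasis_repr_apply, map_smul]
  rw [← algebraMap_smul A]
  exact (congrArg (· • _) (h i)).trans (zero_smul A _)

lemma exists_aeval_mem_span_pderiv {σ R : Type*} [CommRing R] [IsDomain R] [CharZero R]
    (F : MvPolynomial σ R) :
    ∃ P : Polynomial R, P ≠ 0 ∧
      Polynomial.aeval F P ∈ Ideal.span (Set.range fun i => pderiv i F) := by
  -- Otherwise `F` is transcendental in the residue field of some prime containing all `∂ᵢF`,
  -- although its differential there vanishes.
  by_contra! hF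
  obtain ⟨p, hp, hJp, hdisj⟩ := Ideal.exists_le_prime_disjoint
    (Ideal.span (Set.range fun i => pderiv i F))
    ((nonZeroDivisors (Polynomial R)).map (Polynomial.aeval F)) <| by
      rw [Set.disjoint_right]
      rintro _ ⟨P, hP, rfl⟩
      exact hF P (nonZeroDivisors.ne_zero hP)
  let L := FractionRing (MvPolynomial σ R ⧸ p)
  let π : MvPolynomial σ R →ₐ[R] L := (IsScalarTower.toAlgHom R (MvPolynomial σ R ⧸ p) L).comp
    (Ideal.Quotient.mkₐ R p)
  have hπ : ∀ G, π G = 0 ↔ G ∈ p := fun G => by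
    simp [π, L, Ideal.Quotient.eq_zero_iff_mem]
  have hw : Transcendental R (π F) := by
    rintro ⟨P, hP, h⟩
    rw [Polynomial.aeval_algHom_apply, hπ] at h
    exact Set.disjoint_left.mp hdisj h ⟨P, mem_nonZeroDivisors_of_ne_zero hP, rfl⟩
  refine kaehlerDifferential_D_ne_zero_of_transcendental hw ?_
  rw [show π = aeval (π ∘ X) from MvPolynomial.algHom_ext (by simp)]
  refine kaehlerDifferential_D_aeval_eq_zero _ _ fun i => ?_
  rw [← MvPolynomial.aeval_unique π, hπ]
  exact hJp (Ideal.subset_span ⟨i, rfl⟩)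

lemma exists_eval₂_eq_zero_of_pderiv_eq_zero {σ R : Type*} [CommRing R] [IsDomain R] [CharZero R]
    (F : MvPolynomial σ R) :
    ∃ P : Polynomial R, P.coeff 0 ≠ 0 ∧ ∀ {S : Type*} [CommRing S] [IsDomain S] (φ : R →+* S)
      (y : σ → S), (∀ i, eval₂ φ y (pderiv i F) = 0) → eval₂ φ y F ≠ 0 →
        P.eval₂ φ (eval₂ φ y F) = 0 := by
  obtain ⟨P, hP, hmem⟩ := exists_aeval_mem_span_pderiv F
  obtain ⟨Q, hPQ, hQ⟩ := P.exists_eq_pow_rootMultiplicity_mul_and_not_dvd hP 0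
  rw [map_zero, sub_zero] at hPQ hQ
  refine ⟨Q, mt Polynomial.X_dvd_iff.mpr hQ, fun φ y hcrit hne => ?_⟩
  have hspan : Ideal.span (Set.range fun i => pderiv i F) ≤ RingHom.ker (eval₂Hom φ y) :=
    Ideal.span_le.mpr (Set.range_subset_iff.mpr hcrit)
  have hPF : P.eval₂ φ (eval₂ φ y F) = 0 := by
    have := hspan hmem
    rw [RingHom.mem_ker, Polynomial.aeval_def, Polynomial.hom_eval₂] at this
    rwa [show (eval₂Hom φ y).comp (algebraMap R _) = φ from RingHom.ext (eval₂Hom_C φ y)] at this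
  rw [hPQ, Polynomial.eval₂_mul, Polynomial.eval₂_pow, Polynomial.eval₂_X] at hPF
  exact (mul_eq_zero.mp hPF).resolve_left (pow_ne_zero _ hne)

open Polynomial Filter in
lemma exists_forall_pow_le_evalEval_ne_zero {c : ℝ[X][X]} (hc : c ≠ 0) :
    ∃ N : ℕ, ∀ᶠ u in atTop, ∀ w, u ^ N ≤ w → c.evalEval u w ≠ 0 := by
  set a := c.leadingCoeff
  have ha0 : a ≠ 0 := leadingCoeff_ne_zero.mpr hc
  let M := (Finset.range c.natDegree).sup (fun i => (c.coeff i).natDegree) + 1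
  have hcoeff : ∀ᶠ u in atTop, ∀ i ∈ Finset.range c.natDegree,
      ‖(c.coeff i).eval u‖ ≤ ‖(Polynomial.X ^ M * a).eval u‖ := by
    refine (Filter.eventually_all_finset _).mpr fun i hi => ?_
    have hM : (c.coeff i).natDegree < M :=
      Nat.lt_succ_of_le (Finset.le_sup (f := fun i => (c.coeff i).natDegree) hi)
    have hlt : (c.coeff i).degree < (Polynomial.X ^ M * a).degree :=
      degree_lt_degree <| hM.trans_le <| by rw [natDegree_X_pow_mul _ ha0]; omega
    simpa only [one_mul] using (isLittleO_atTop_of_degree_lt _ _ hlt).def one_pos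
  refine ⟨M + 1, ?_⟩
  filter_upwards [a.eventually_atTop_not_isRoot ha0, eventually_ge_atTop 2, hcoeff]
    with u hau hu hcoeff w hw h0
  have hlead : (c.map (evalRingHom u)).leadingCoeff = a.eval u :=
    leadingCoeff_map_of_leadingCoeff_ne_zero (evalRingHom u) hau
  have hroot : (c.map (evalRingHom u)).IsRoot w := by
    rw [IsRoot, Polynomial.eval_map, ← h0, evalEval, eval₂_evalRingHom]
  have hbound : (cauchyBound (c.map (evalRingHom u)) : ℝ) ≤ u ^ M + 1 := by
    lift u to NNReal using by linarith
    rw [cauchyBound, hlead]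
    norm_cast
    refine add_le_add_left (div_le_of_le_mul₀ zero_le zero_le <| Finset.sup_le fun i hi => ?_) 1
    rw [Polynomial.coeff_map]
    simpa [← NNReal.coe_le_coe] using hcoeff i (Finset.range_mono natDegree_map_le hi)
  have hw' : |w| < u ^ M + 1 := lt_of_lt_of_le
    (by exact_mod_cast hroot.norm_lt_cauchyBound (leadingCoeff_ne_zero.mp (hlead ▸ hau))) hbound
  have : (1 : ℝ) ≤ u ^ M := one_le_pow₀ (by linarith)
  rw [pow_succ] at hw
  nlinarith [le_abs_self w]

lemma dense_setOf_eval_ne_zero {σ : Type*} [Finite σ] {q : MvPolynomial σ ℝ} (hq : q ≠ 0) :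
    Dense {x : σ → ℝ | eval x q ≠ 0} := by
  have := Fintype.ofFinite σ
  refine Metric.dense_iff.mpr fun x ε hε => ?_
  by_contra! hcon
  have hbox (i : σ) : (Metric.ball (x i) ε).Infinite := by
    rw [Real.ball_eq_Ioo]; exact Set.Ioo_infinite (by linarith)
  refine hq (funext_set (q := 0) _ hbox fun y hy => by_contra fun hne => ?_)
  rw [map_zero] at hne
  exact Set.eq_empty_iff_forall_notMem.mp hcon y ⟨by rwa [ball_pi x hε], hne⟩

/-! ### Quotients of powers -/

section Quotient

open Filter Topology

variable {E : Type*} {f g : E → ℝ} {a : ℕ}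

lemma eq_zero_of_eventually_abs_pow_le [TopologicalSpace E]
    (h : ∀ z, f z = 0 → ∀ᶠ y in 𝓝 z, |g y| ^ a ≤ |f y|) {z : E} (hz : f z = 0) : g z = 0 := by
  have := (h z hz).self_of_nhds
  rw [hz, abs_zero, ← abs_pow, abs_nonpos_iff] at this
  exact eq_zero_of_pow_eq_zero this

-- Division by zero supplies the continuous extension by `0` across the zeros of `f`.
lemma continuous_pow_div_pow [TopologicalSpace E] (hf : Continuous f) (hg : Continuous g)
    (h : ∀ z, f z = 0 → ∀ᶠ y in 𝓝 z, |g y| ^ a ≤ |f y|) {m N : ℕ} (hN : m * a < N) :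
    Continuous fun x => g x ^ N / f x ^ m := by
  refine continuous_iff_continuousAt.mpr fun z => ?_
  by_cases hz : f z = 0
  · have hgz : g z = 0 := eq_zero_of_eventually_abs_pow_le h hz
    have hlim : Tendsto (fun y => |g y| ^ (N - m * a)) (𝓝 z) (𝓝 0) := by
      have : Continuous fun y => |g y| ^ (N - m * a) := by fun_prop
      simpa [hgz, Nat.sub_ne_zero_of_lt hN] using this.tendsto z
    rw [ContinuousAt, hgz, zero_pow (by omega), zero_div]
    refine squeeze_zero_norm' ?_ hlim
    filter_upwards [h z hz] with y hy
    rw [Real.norm_eq_abs, abs_div, abs_pow, abs_pow]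
    refine div_le_of_le_mul₀ (by positivity) (by positivity) ?_
    calc |g y| ^ N = |g y| ^ (N - m * a) * (|g y| ^ a) ^ m := by
          rw [← pow_mul', ← pow_add, Nat.sub_add_cancel hN.le]
      _ ≤ |g y| ^ (N - m * a) * |f y| ^ m := by gcongr
  · exact (hg.continuousAt.pow N).div (hf.continuousAt.pow m) (pow_ne_zero _ hz)

variable [NormedAddCommGroup E] [NormedSpace ℝ E]

lemma hasFDerivAt_pow_div_pow (hf : Differentiable ℝ f) (hg : Differentiable ℝ g)
    (h : ∀ z, f z = 0 → ∀ᶠ y in 𝓝 z, |g y| ^ a ≤ |f y|) {m N : ℕ} (hN : m * a < N) (z : E) :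
    HasFDerivAt (fun x => g x ^ (N + 1) / f x ^ m)
      ((g z ^ N / f z ^ (m + 1)) •
        (((N + 1 : ℕ) * f z) • fderiv ℝ g z - (m * g z) • fderiv ℝ f z)) z := by
  by_cases hz : f z = 0
  · have hgz : g z = 0 := eq_zero_of_eventually_abs_pow_le h hz
    have hg_isBigO : g =O[𝓝 z] fun x => x - z := by
      simpa [hgz] using (hg z).hasFDerivAt.isBigO_sub
    have hquot : (fun x => g x ^ N / f x ^ m) =o[𝓝 z] fun _ => (1 : ℝ) := by
      rw [Asymptotics.isLittleO_one_iff]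
      simpa [hgz, Nat.ne_zero_of_lt hN] using
        (continuous_pow_div_pow hf.continuous hg.continuous h hN).tendsto z
    rw [hz, zero_pow m.succ_ne_zero, div_zero, zero_smul, hasFDerivAt_iff_isLittleO,
      ← Asymptotics.isLittleO_norm_right]
    refine (hg_isBigO.norm_right.mul_isLittleO hquot).congr (fun x => ?_) fun x => mul_one _
    simp only [hgz, zero_apply, zero_pow N.succ_ne_zero, zero_div, sub_zero]
    ring
  · have hnum := (hg z).hasFDerivAt.pow (N + 1)
    have hden := (hasDerivAt_zpow (-m) (f z) (.inl hz)).comp_hasFDerivAt z (hf z).hasFDerivAt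
    refine ((hnum.mul hden).congr_fderiv ?_).congr_of_eventuallyEq (.of_forall fun x => ?_)
    · ext v
      simp only [Int.cast_neg, Int.cast_natCast, zpow_sub₀ hz, zpow_neg, zpow_natCast, zpow_ofNat,
        pow_one, neg_mul, neg_smul, smul_neg, Function.comp_apply, add_tsub_cancel_right,
        nsmul_eq_mul, Nat.cast_add, Nat.cast_one, add_apply, neg_apply, smul_apply, smul_eq_mul,
        sub_apply]
      field_simp
      ring
    · simp [div_eq_mul_inv]

lemma exists_contDiff_pow_div_pow
    (h : ∀ z, f z = 0 → ∀ᶠ y in 𝓝 z, |g y| ^ a ≤ |f y|) {k : ℕ}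
    (hf : ContDiff ℝ k f) (hg : ContDiff ℝ k g) (m : ℕ) :
    ∃ M, ∀ N ≥ M, ContDiff ℝ k fun x => g x ^ N / f x ^ m := by
  induction k generalizing m with
  | zero =>
    refine ⟨m * a + 1, fun N hN => ?_⟩
    rw [Nat.cast_zero, contDiff_zero]
    exact continuous_pow_div_pow hf.continuous hg.continuous h hN
  | succ k ih =>
    have hfk : ContDiff ℝ k f := hf.of_le (by norm_cast; omega)
    have hgk : ContDiff ℝ k g := hg.of_le (by norm_cast; omega)
    obtain ⟨M, hM⟩ := ih hfk hgk (m + 1)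
    refine ⟨M + m * a + 2, fun N hN => ?_⟩
    obtain ⟨N, rfl⟩ : ∃ N', N = N' + 1 := ⟨N - 1, by omega⟩
    have hderiv := hasFDerivAt_pow_div_pow (hf.differentiable (by norm_cast))
      (hg.differentiable (by norm_cast)) h (show m * a < N by omega)
    rw [Nat.cast_succ, contDiff_succ_iff_fderiv, funext fun z => (hderiv z).fderiv]
    have hf' : ContDiff ℝ k (fderiv ℝ f) := hf.fderiv_right (by norm_cast)
    have hg' : ContDiff ℝ k (fderiv ℝ g) := hg.fderiv_right (by norm_cast)
    exact ⟨fun z => (hderiv z).differentiableAt, by simp, (hM N (by omega)).smul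
      (((contDiff_const.mul hfk).smul hg').sub ((contDiff_const.mul hgk).smul hf'))⟩

end Quotient

/-! ### A Łojasiewicz inequality -/

open Filter Topology in
lemma nonneg_of_negative_minima_isolated {Y : Type*} [TopologicalSpace Y] {Φ : ℝ → Y → ℝ}
    (hΦ : Continuous ↿Φ) {K : Set Y} (hK : IsCompact K) (hΦK : ∀ T, ∀ y ∉ K, 0 ≤ Φ T y)
    {R : ℝ → ℝ → ℝ} (hR : Continuous ↿R) {b : ℝ} (hR0 : ∀ T ≥ b, R T 0 ≠ 0)
    (hmin : ∀ T y, (∀ z, Φ T y ≤ Φ T z) → Φ T y < 0 → R T (Φ T y) = 0)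
    (hlarge : ∀ᶠ T in atTop, ∀ y, 0 ≤ Φ T y) : ∀ T ≥ b, ∀ y, 0 ≤ Φ T y := by
  -- The set of `T ≥ b` at which the minimum of `Φ T` is negative is open and closed.
  by_contra! ⟨T₁, hT₁, y₁, hy₁⟩
  have hKne : K.Nonempty := ⟨y₁, by_contra fun h => hy₁.not_ge (hΦK T₁ y₁ h)⟩
  let μ (T : ℝ) := sInf (Φ T '' K)
  have hμ : Continuous μ := hK.continuous_sInf hΦ
  have hμ_attained (T : ℝ) : ∃ y ∈ K, μ T = Φ T y ∧ ∀ z ∈ K, Φ T y ≤ Φ T z :=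
    hK.exists_sInf_image_eq_and_le hKne (hΦ.uncurry_left T).continuousOn
  have hμ_neg {T : ℝ} {y : Y} (hy : Φ T y < 0) : μ T < 0 := by
    obtain ⟨x, -, hx, hle⟩ := hμ_attained T
    exact (hx.trans_le (hle y (by_contra fun h => hy.not_ge (hΦK T y h)))).trans_lt hy
  have hμ_root {T : ℝ} (hT : μ T < 0) : R T (μ T) = 0 := by
    obtain ⟨x, -, hx, hle⟩ := hμ_attained T
    rw [hx] at hT ⊢
    refine hmin T x (fun z => ?_) hT
    by_cases hz : z ∈ K
    exacts [hle z hz, hT.le.trans (hΦK T z hz)]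
  have hclosure : closure {T | μ T < 0} ⊆ {T | μ T ≤ 0 ∧ R T (μ T) = 0} :=
    closure_minimal (fun T hT => ⟨hT.le, hμ_root hT⟩) <| (isClosed_le hμ continuous_const).inter
      (isClosed_eq (hR.comp (continuous_id.prodMk hμ)) continuous_const)
  have hneg : Set.Ici b ⊆ {T | μ T < 0} :=
    isPreconnected_Ici.subset_of_closure_inter_subset (isOpen_lt hμ continuous_const)
      ⟨T₁, hT₁, hμ_neg hy₁⟩ fun T ⟨hT, hbT⟩ =>
        (hclosure hT).1.lt_of_ne fun h0 => hR0 T hbT (h0 ▸ (hclosure hT).2)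
  obtain ⟨T, hT, hbT⟩ := (hlarge.and (eventually_ge_atTop b)).exists
  obtain ⟨x, -, hx, -⟩ := hμ_attained T
  exact (hneg hbT).not_ge (hx ▸ hT x)

lemma hasDerivAt_eval_update {σ : Type*} [DecidableEq σ] (F : MvPolynomial σ ℝ) (y : σ → ℝ)
    (i : σ) :
    HasDerivAt (fun t => eval (Function.update y i t) F) (eval y (pderiv i F)) (y i) := by
  induction F using MvPolynomial.induction_on with
  | C a => simpa using hasDerivAt_const (y i) a
  | add p q hp hq => simpa using hp.fun_add hq
  | mul_X p j hp =>
    have hX : HasDerivAt (fun t => Function.update y i t j)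
        ((Pi.single i 1 : σ → ℝ) j) (y i) := by
      rcases eq_or_ne j i with rfl | hji
      · simpa using hasDerivAt_id' (y j)
      · simpa [hji] using hasDerivAt_const (y i) (y j)
    simpa [Derivation.leibniz, pderiv_X, Pi.single_apply, apply_ite (eval y), mul_comm, add_comm]
      using hp.fun_mul hX

lemma eval_pderiv_eq_zero_of_forall_le {σ : Type*} (F : MvPolynomial σ ℝ) {y : σ → ℝ}
    (hy : ∀ z, eval y F ≤ eval z F) (i : σ) : eval y (pderiv i F) = 0 := by
  classical
  refine IsLocalMin.hasDerivAt_eq_zero (.of_forall fun t => ?_) (hasDerivAt_eval_update F y i)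
  rw [Function.update_eq_self]
  exact hy _

open Polynomial Filter in
lemma exists_forall_pow_le_nonneg {σ : Type*} (F : MvPolynomial σ ℝ[X][X])
    (hK : ∀ u, ∃ K, IsCompact K ∧ ∀ T, ∀ y ∉ K, 0 ≤ F.eval₂ (evalEvalRingHom u T) y)
    (hlarge : ∀ u, ∀ᶠ T in atTop, ∀ y, 0 ≤ F.eval₂ (evalEvalRingHom u T) y) :
    ∃ N : ℕ, ∀ᶠ u in atTop, ∀ T, u ^ N ≤ T → ∀ y, 0 ≤ F.eval₂ (evalEvalRingHom u T) y := by
  obtain ⟨P, hP0, hP⟩ := exists_eval₂_eq_zero_of_pderiv_eq_zero F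
  obtain ⟨N, hN⟩ := exists_forall_pow_le_evalEval_ne_zero hP0
  refine ⟨N, hN.mono fun u hu => ?_⟩
  obtain ⟨K, hKcompact, hFK⟩ := hK u
  have hcont (p : ℝ[X][X]) : Continuous fun T => p.evalEval u T := by
    simpa only [Polynomial.eval_map, eval₂_evalRingHom] using
      (p.map (evalRingHom u)).continuous
  refine nonneg_of_negative_minima_isolated (Φ := fun T y => F.eval₂ (evalEvalRingHom u T) y)
    (R := fun T v => P.eval₂ (evalEvalRingHom u T) v) ?_ hKcompact hFK ?_ (fun T hT => ?_)
    (fun T y hy hneg => ?_) (hlarge u)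
  · simp only [Function.HasUncurry.uncurry, id_eq, MvPolynomial.eval₂_eq, coe_evalEvalRingHom]
    exact continuous_finsetSum _ fun d _ => ((hcont _).comp continuous_fst).mul <|
      continuous_finsetProd _ fun i _ => ((continuous_apply i).comp continuous_snd).pow _
  · simp only [Function.HasUncurry.uncurry, id_eq, Polynomial.eval₂_eq_sum_range,
      coe_evalEvalRingHom]
    exact continuous_finsetSum _ fun i _ => ((hcont _).comp continuous_fst).mul <|
      continuous_snd.pow i
  · simpa [Polynomial.eval₂_at_zero] using hu T hT
  · refine hP _ y (fun i => ?_) hneg.ne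
    simp only [MvPolynomial.eval₂_eq_eval_map] at hy ⊢
    rw [← MvPolynomial.pderiv_map]
    exact eval_pderiv_eq_zero_of_forall_le _ hy i

open Filter in
lemma eventually_forall_le_mul_sq_add {X : Type*} [TopologicalSpace X] {f g φ : X → ℝ}
    (hf : Continuous f) (hg : Continuous g) (hZ : ∀ x, f x = 0 → g x = 0) (hφ0 : ∀ x, 0 ≤ φ x)
    {u : ℝ} (hK : IsCompact {x | φ x ≤ u}) :
    ∀ᶠ T in atTop, ∀ x, g x ≠ 0 → u ≤ (T * f x) ^ 2 + (g x ^ 2)⁻¹ + φ x := by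
  obtain ⟨δ, hδ, hfδ⟩ : ∃ δ > 0, ∀ x ∈ {x | φ x ≤ u} ∩ {x | 1 ≤ u * g x ^ 2}, δ ≤ f x ^ 2 := by
    refine (hK.inter_right (isClosed_le (by fun_prop) (by fun_prop))).exists_forall_le'
      (by fun_prop) fun x hx => sq_pos_of_ne_zero fun h0 => ?_
    have := hx.2
    norm_num [hZ x h0] at this
  filter_upwards [eventually_ge_atTop (u / δ), eventually_ge_atTop 1] with T hT hT1 x hx
  by_contra! h
  have hgx : 0 < g x ^ 2 := by positivity
  have hginv : 0 < (g x ^ 2)⁻¹ := inv_pos.mpr hgx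
  have hgu : (g x ^ 2)⁻¹ < u := by linarith [hφ0 x, sq_nonneg (T * f x)]
  have hφu : φ x ≤ u := by linarith [sq_nonneg (T * f x)]
  have hfx : δ ≤ f x ^ 2 := hfδ x ⟨hφu, ((inv_lt_iff_one_lt_mul₀ hgx).mp hgu).le⟩
  have : u ≤ (T * f x) ^ 2 := calc
    u ≤ T * δ := (div_le_iff₀ hδ).mp hT
    _ ≤ T ^ 2 * f x ^ 2 := by gcongr; exact le_self_pow₀ hT1 two_ne_zero
    _ = (T * f x) ^ 2 := (mul_pow ..).symm
  linarith [hφ0 x]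

lemma isCompact_setOf_sum_sq_le {σ : Type*} [Fintype σ] (u : ℝ) :
    IsCompact {y : σ → ℝ | ∑ i, y i ^ 2 ≤ u} := by
  refine Metric.isCompact_of_isClosed_isBounded (isClosed_le (by fun_prop) continuous_const) ?_
  refine (isBounded_iff_forall_norm_le.mpr ⟨√u, fun y hy => ?_⟩)
  refine (pi_norm_le_iff_of_nonneg (Real.sqrt_nonneg u)).mpr fun i => Real.abs_le_sqrt ?_
  exact (Finset.single_le_sum (fun j _ => sq_nonneg (y j)) (Finset.mem_univ i)).trans hy

open Polynomial Filter in
lemma exists_forall_le_pow_mul_sq_add {σ : Type*} [Fintype σ] {f g : (σ → ℝ) → ℝ}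
    (hf : Continuous f) (hg : Continuous g) (hZ : ∀ x, f x = 0 → g x = 0)
    {a b q : MvPolynomial σ ℝ} (ha : ∀ y, eval y a = eval y q * f y)
    (hb : ∀ y, eval y b * g y = eval y q) :
    ∃ N : ℕ, ∀ᶠ u in atTop, ∀ y, eval y q ≠ 0 →
      u ≤ (u ^ N * f y) ^ 2 + (g y ^ 2)⁻¹ + ∑ i, y i ^ 2 := by
  -- The inner variable of `ℝ[X][X]` plays the role of `u`, the outer one that of `T`.
  let ι : MvPolynomial σ ℝ →+* MvPolynomial σ ℝ[X][X] := MvPolynomial.map (algebraMap ℝ ℝ[X][X])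
  let F : MvPolynomial σ ℝ[X][X] := (MvPolynomial.C (Polynomial.X : ℝ[X][X]) * ι a) ^ 2 + ι b ^ 2 +
    (∑ i, MvPolynomial.X i ^ 2 - MvPolynomial.C (Polynomial.C Polynomial.X : ℝ[X][X])) * ι q ^ 2
  have hF (u T : ℝ) (y : σ → ℝ) : F.eval₂ (evalEvalRingHom u T) y =
      (T * eval y a) ^ 2 + eval y b ^ 2 + (∑ i, y i ^ 2 - u) * eval y q ^ 2 := by
    have hι (p : MvPolynomial σ ℝ) : (ι p).eval₂ (evalEvalRingHom u T) y = eval y p := by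
      have hid : (evalEvalRingHom u T).comp (algebraMap ℝ ℝ[X][X]) = RingHom.id ℝ :=
        RingHom.ext fun r => by simp
      rw [MvPolynomial.eval₂_map, hid]
      rfl
    simp [F, hι]
  have hnonneg {u T : ℝ} {y : σ → ℝ} (hy : eval y q ≠ 0) : 0 ≤ F.eval₂ (evalEvalRingHom u T) y ↔
      u ≤ (T * f y) ^ 2 + (g y ^ 2)⁻¹ + ∑ i, y i ^ 2 := by
    have hgy : g y ≠ 0 := fun h0 => hy (by rw [← hb, h0, mul_zero])
    have : F.eval₂ (evalEvalRingHom u T) y =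
        eval y q ^ 2 * ((T * f y) ^ 2 + (g y ^ 2)⁻¹ + ∑ i, y i ^ 2 - u) := by
      rw [hF, ha, eq_div_of_mul_eq hgy (hb y)]
      field_simp
      ring
    rw [this, mul_nonneg_iff_of_pos_left (by positivity), sub_nonneg]
  have hsq (u T : ℝ) (y : σ → ℝ) (hy : eval y q = 0) : 0 ≤ F.eval₂ (evalEvalRingHom u T) y := by
    rw [hF, hy, zero_pow two_ne_zero, mul_zero, add_zero]
    positivity
  suffices ∃ N : ℕ, ∀ᶠ u in atTop, ∀ T, u ^ N ≤ T → ∀ y, 0 ≤ F.eval₂ (evalEvalRingHom u T) y from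
    this.imp fun N hN => hN.mono fun u hu y hy => (hnonneg hy).mp (hu _ le_rfl y)
  refine exists_forall_pow_le_nonneg F (fun u => ⟨_, isCompact_setOf_sum_sq_le u,
      fun T y hy => ?_⟩) fun u => ?_
  · rw [hF]
    have : 0 ≤ ∑ i, y i ^ 2 - u := sub_nonneg.mpr (le_of_not_ge hy)
    positivity
  · have hnorm (y : σ → ℝ) : 0 ≤ ∑ i, y i ^ 2 := Finset.sum_nonneg fun i _ => sq_nonneg (y i)
    refine (eventually_forall_le_mul_sq_add hf hg hZ hnorm (isCompact_setOf_sum_sq_le u)).mono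
      fun T hT y => ?_
    by_cases hy : eval y q = 0
    · exact hsq u T y hy
    · exact (hnonneg hy).mpr (hT y fun h0 => hy (by rw [← hb, h0, mul_zero]))

lemma eq_zero_of_eval_mul_eq_zero {σ : Type*} [Finite σ] {f : (σ → ℝ) → ℝ} (hf : Continuous f)
    {q : MvPolynomial σ ℝ} (hq : q ≠ 0) (h : ∀ y, eval y q * f y = 0) : f = 0 :=
  hf.ext_on (dense_setOf_eval_ne_zero hq) continuous_zero
    fun y hy => (mul_eq_zero.mp (h y)).resolve_left hy

lemma abs_pow_le_abs_of_le_sq_add {f g s : ℝ} (hg : g ≠ 0) (hs : 0 ≤ s) (hg2 : |g| ≤ 2⁻¹)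
    (hgs : |g| * (s + 1) ≤ 2⁻¹) {N : ℕ}
    (h : (g ^ 2)⁻¹ + s + 1 ≤ (((g ^ 2)⁻¹ + s + 1) ^ N * f) ^ 2 + (g ^ 2)⁻¹ + s) :
    |g| ^ (3 * N) ≤ |f| := by
  set u := (g ^ 2)⁻¹ + s + 1 with hu
  have hu0 : 0 < u := by positivity
  have hgu : |g| ^ 3 * u ≤ 1 := calc
    |g| ^ 3 * u = |g| + |g| ^ 2 * (|g| * (s + 1)) := by
      rw [hu, ← sq_abs g]
      field_simp
      ring
    _ ≤ 2⁻¹ + 1 * 2⁻¹ := by gcongr; exact pow_le_one₀ (abs_nonneg g) (hg2.trans (by norm_num))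
    _ = 1 := by norm_num
  have hf : 1 ≤ u ^ N * |f| := by
    rw [← abs_of_pos (pow_pos hu0 N), ← abs_mul, ← one_le_sq_iff_one_le_abs]
    linarith
  calc |g| ^ (3 * N) ≤ |g| ^ (3 * N) * (u ^ N * |f|) := le_mul_of_one_le_right (by positivity) hf
    _ = (|g| ^ 3 * u) ^ N * |f| := by rw [pow_mul, mul_pow, mul_assoc]
    _ ≤ |f| := mul_le_of_le_one_left (abs_nonneg f) (pow_le_one₀ (by positivity) hgu)

open Filter Topology in
lemma exists_eventually_abs_pow_le_of_zero_imp {σ : Type*} [Finite σ] {f g : (σ → ℝ) → ℝ}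
    (hf : Continuous f) (hg : Continuous g) (hZ : ∀ x, f x = 0 → g x = 0)
    {p₁ q₁ p₂ q₂ : MvPolynomial σ ℝ} (hq₁ : q₁ ≠ 0) (hfq : ∀ y, eval y q₁ * f y = eval y p₁)
    (hq₂ : q₂ ≠ 0) (hgq : ∀ y, eval y q₂ * g y = eval y p₂) :
    ∃ N : ℕ, ∀ z, f z = 0 → ∀ᶠ y in 𝓝 z, |g y| ^ N ≤ |f y| := by
  have := Fintype.ofFinite σ
  rcases eq_or_ne p₂ 0 with rfl | hp₂
  · simp only [map_zero] at hgq
    exact ⟨1, fun z _ => .of_forall fun y => by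
      simp [eq_zero_of_eval_mul_eq_zero hg hq₂ hgq]⟩
  obtain ⟨N, hN⟩ := exists_forall_le_pow_mul_sq_add hf hg hZ
    (a := p₁ * q₂ * p₂) (b := q₁ * q₂ * q₂) (q := q₁ * q₂ * p₂)
    (fun y => by simp only [map_mul, ← hfq]; ring) (fun y => by simp only [map_mul, ← hgq]; ring)
  obtain ⟨u₀, hu₀⟩ := eventually_atTop.mp hN
  refine ⟨3 * N, fun z hz => ?_⟩
  have hnear {φ : (σ → ℝ) → ℝ} (hφ : Continuous φ) : ∀ᶠ y in 𝓝 z, |g y| * φ y < 2⁻¹ :=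
    ((hg.abs.mul hφ).tendsto z).eventually_lt_const (by simp [hZ z hz])
  have hQ : ∀ᶠ y in 𝓝 z, eval y (q₁ * q₂ * p₂) ≠ 0 → |g y| ^ (3 * N) ≤ |f y| := by
    filter_upwards [hnear (continuous_const (y := 1)), hnear (continuous_const (y := u₀)),
      hnear (φ := fun y => ∑ i, y i ^ 2 + 1) (by fun_prop)] with y h1 hu hs hy
    have hgy : g y ≠ 0 := fun h0 => hy (by simp [← hgq, h0])
    have hsum : 0 ≤ ∑ i, y i ^ 2 := Finset.sum_nonneg fun i _ => sq_nonneg (y i)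
    rw [mul_one] at h1
    refine abs_pow_le_abs_of_le_sq_add hgy hsum h1.le hs.le ?_
    have hu₀g : u₀ ≤ (g y ^ 2)⁻¹ := by
      rw [← sq_abs, ← one_div, le_div_iff₀ (by positivity)]
      nlinarith [abs_nonneg (g y)]
    linarith [hu₀ ((g y ^ 2)⁻¹ + ∑ i, y i ^ 2 + 1) (by linarith) y hy]
  filter_upwards [hQ.eventually_nhds] with y hy
  have hfreq : ∃ᶠ w in 𝓝 y, eval w (q₁ * q₂ * p₂) ≠ 0 := mem_closure_iff_frequently.mp
    (dense_setOf_eval_ne_zero (mul_ne_zero (mul_ne_zero hq₁ hq₂) hp₂) y)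
  exact (isClosed_le (hg.abs.pow (3 * N)) hf.abs).mem_of_frequently_of_tendsto
    ((hfreq.and_eventually hy).mono fun w hw => hw.2 hw.1) tendsto_id

lemma IsRegulous.exists_pow_eq_mul {n k : ℕ} {f g : (Fin n → ℝ) → ℝ} (hf : IsRegulous n k f)
    (hg : IsRegulous n k g) (hZ : ∀ x, f x = 0 → g x = 0) :
    ∃ N : ℕ, ∃ h, IsRegulous n k h ∧ g ^ N = h * f := by
  obtain ⟨hfC, p₁, q₁, hq₁, hfq⟩ := hf
  obtain ⟨hgC, p₂, q₂, hq₂, hgq⟩ := hg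
  rcases eq_or_ne p₁ 0 with rfl | hp₁
  · have hf0 : f = 0 := eq_zero_of_eval_mul_eq_zero hfC.continuous hq₁ (by simpa using hfq)
    have hg0 : g = 0 := funext fun x => hZ x (congrFun hf0 x)
    exact ⟨1, 0, (regulousRing n k).zero_mem, by simp [hg0]⟩
  obtain ⟨a, ha⟩ := exists_eventually_abs_pow_le_of_zero_imp hfC.continuous hgC.continuous hZ
    hq₁ hfq hq₂ hgq
  obtain ⟨M, hM⟩ := exists_contDiff_pow_div_pow ha hfC hgC 1
  refine ⟨M + 1, fun x => g x ^ (M + 1) / f x ^ 1, ⟨hM _ M.le_succ, p₂ ^ (M + 1) * q₁,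
    q₂ ^ (M + 1) * p₁, mul_ne_zero (pow_ne_zero _ hq₂) hp₁, fun x => ?_⟩, funext fun x => ?_⟩
  · rcases eq_or_ne (f x) 0 with hfx | hfx
    · simp [← hfq, ← hgq, hfx, hZ x hfx]
    · simp only [map_mul, map_pow, ← hfq, ← hgq]
      field_simp
      ring
  · rcases eq_or_ne (f x) 0 with hfx | hfx
    · simp [hfx, hZ x hfx]
    · simp [hfx]

/-! ### Generic points of irreducible varieties -/

section PrimeOfPolynomialRing

open Polynomial

variable {A : Type*} [CommRing A]

lemma degree_C_leadingCoeff_mul_sub_lt {m F : A[X]} (hF : F ≠ 0) (h : m.natDegree ≤ F.natDegree) :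
    (Polynomial.C m.leadingCoeff * F -
      Polynomial.C F.leadingCoeff * Polynomial.X ^ (F.natDegree - m.natDegree) * m).degree <
        F.degree := by
  rw [degree_eq_natDegree hF, degree_lt_iff_coeff_zero]
  intro j hj
  rw [Polynomial.coeff_sub, Polynomial.coeff_C_mul, mul_assoc, Polynomial.coeff_C_mul,
    coeff_X_pow_mul', if_pos (by omega)]
  rcases hj.eq_or_lt with rfl | hlt
  · rw [Nat.sub_sub_self h, coeff_natDegree, coeff_natDegree, mul_comm, sub_self]
  · rw [coeff_eq_zero_of_natDegree_lt hlt, coeff_eq_zero_of_natDegree_lt (p := m) (by omega),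
      mul_zero, mul_zero, sub_zero]

variable {J : Ideal A[X]}

lemma exists_leadingCoeff_notMem_forall_degree_lt (hJ : ¬J ≤ (J.under A).map Polynomial.C) :
    ∃ m ∈ J, m.leadingCoeff ∉ J.under A ∧
      ∀ G ∈ J, G.degree < m.degree → G ∈ (J.under A).map Polynomial.C := by
  obtain ⟨F, hFJ, hF⟩ := SetLike.not_le_iff_exists.mp hJ
  obtain ⟨m, ⟨hmJ, hm⟩, hmin⟩ := WellFounded.has_min
    (InvImage.wf (degree : A[X] → WithBot ℕ) wellFounded_lt)
    {G ∈ J | G ∉ (J.under A).map Polynomial.C} ⟨F, hFJ, hF⟩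
  have hlt (G : A[X]) (hG : G ∈ J) (hdeg : G.degree < m.degree) :
      G ∈ (J.under A).map Polynomial.C :=
    by_contra fun h => hmin G ⟨hG, h⟩ hdeg
  refine ⟨m, hmJ, fun hlc => hm ?_, hlt⟩
  have hlead : Polynomial.C m.leadingCoeff * Polynomial.X ^ m.natDegree ∈
      (J.under A).map Polynomial.C :=
    Ideal.mul_mem_right _ _ (Ideal.mem_map_of_mem _ hlc)
  have hm0 : m ≠ 0 := fun h => hm (h ▸ zero_mem _)
  rw [← m.eraseLead_add_C_mul_X_pow]
  refine add_mem (hlt _ ?_ (degree_eraseLead_lt hm0)) hlead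
  rw [← Polynomial.self_sub_C_mul_X_pow]
  exact sub_mem hmJ (Ideal.map_comap_le hlead)

lemma exists_C_leadingCoeff_pow_mul_mem {I : Ideal A[X]} {m : A[X]} (hm : m ∈ J)
    (hmin : ∀ G ∈ J, G.degree < m.degree → G ∈ I) {F : A[X]} (hF : F ∈ J) :
    ∃ e : ℕ, Polynomial.C m.leadingCoeff ^ e * F ∈ Ideal.span {m} ⊔ I := by
  induction h : F.degree using WellFoundedLT.induction generalizing F with
  | ind d ih =>
    subst h
    rcases lt_or_ge F.degree m.degree with hlt | hge
    · exact ⟨0, by simpa using Ideal.mem_sup_right (hmin F hF hlt)⟩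
    rcases eq_or_ne F 0 with rfl | hF0
    · exact ⟨0, by simp⟩
    obtain ⟨e, he⟩ := ih _ (degree_C_leadingCoeff_mul_sub_lt hF0 (natDegree_le_natDegree hge))
      (sub_mem (J.mul_mem_left _ hF) (J.mul_mem_left _ hm)) rfl
    refine ⟨e + 1, ?_⟩
    rw [pow_succ, mul_assoc, ← sub_add_cancel (Polynomial.C m.leadingCoeff * F), mul_add]
    exact add_mem he (Ideal.mem_sup_left (Ideal.mul_mem_left _ _ (Ideal.mul_mem_left _ _
      (Ideal.mem_span_singleton_self m))))

lemma exists_leadingCoeff_derivative_notMem [Algebra ℚ A]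
    (hJ : ¬J ≤ (J.under A).map Polynomial.C) :
    ∃ m ∈ J, m.leadingCoeff ∉ J.under A ∧ derivative m ∉ J ∧ ∀ F ∈ J,
      ∃ e : ℕ, Polynomial.C m.leadingCoeff ^ e * F ∈
        Ideal.span {m} ⊔ (J.under A).map Polynomial.C := by
  obtain ⟨m, hmJ, hlc, hmin⟩ := exists_leadingCoeff_notMem_forall_degree_lt hJ
  refine ⟨m, hmJ, hlc, fun hder => ?_, fun F hF => exists_C_leadingCoeff_pow_mul_mem hmJ hmin hF⟩
  have hdeg : m.natDegree ≠ 0 := fun h => hlc <| by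
    rwa [Ideal.mem_under, Polynomial.algebraMap_eq, leadingCoeff, h, ← eq_C_of_natDegree_eq_zero h]
  have hcoeff : (derivative m).coeff (m.natDegree - 1) ∈ J.under A :=
    Ideal.mem_map_C_iff.mp (hmin _ hder (degree_derivative_lt (by rintro rfl; simp at hdeg))) _
  rw [coeff_derivative, ← Nat.cast_succ, Nat.succ_eq_add_one, Nat.sub_add_cancel (by omega)]
    at hcoeff
  have hunit : IsUnit (m.natDegree : A) := by
    simpa using (Nat.cast_ne_zero (R := ℚ).mpr hdeg).isUnit.map (algebraMap ℚ A)
  exact hlc ((Ideal.mul_unit_mem_iff_mem _ hunit).mp hcoeff)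

lemma exists_notMem_under_C_mem_span_sup [J.IsPrime] (hJ : ¬J ≤ (J.under A).map Polynomial.C)
    {F : A[X]} (hF : F ∉ J) : ∃ c ∉ J.under A, Polynomial.C c ∈ Ideal.span {F} ⊔ J := by
  obtain ⟨G, hGJ, hG⟩ := SetLike.not_le_iff_exists.mp hJ
  have haeval (P : A[X]) : aeval (Ideal.Quotient.mk J Polynomial.X)
      (P.map (Ideal.Quotient.mk (J.under A))) = Ideal.Quotient.mk J P := by
    rw [Polynomial.aeval_def, Polynomial.eval₂_map]
    exact (Polynomial.hom_eval₂ P Polynomial.C (Ideal.Quotient.mk J) Polynomial.X).symm.trans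
      (by simp)
  have hX : IsAlgebraic (A ⧸ J.under A) (Ideal.Quotient.mk J Polynomial.X) := by
    refine ⟨G.map (Ideal.Quotient.mk (J.under A)),
      fun h0 => hG (Ideal.mem_map_C_iff.mpr fun i => ?_), ?_⟩
    · rw [← Ideal.Quotient.eq_zero_iff_mem, ← Polynomial.coeff_map, h0, Polynomial.coeff_zero]
    · rw [haeval, Ideal.Quotient.eq_zero_iff_mem.mpr hGJ]
  have hFalg : IsAlgebraic (A ⧸ J.under A) (Ideal.Quotient.mk J F) :=
    Algebra.isAlgebraic_adjoin_singleton_iff.mpr hX _ (haeval F ▸ aeval_mem_adjoin_singleton _ _)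
  obtain ⟨c, hc, H, hH⟩ := hFalg.exists_nonzero_dvd
    (mem_nonZeroDivisors_of_ne_zero (mt Ideal.Quotient.eq_zero_iff_mem.mp hF))
  obtain ⟨c, rfl⟩ := Ideal.Quotient.mk_surjective c
  obtain ⟨H, rfl⟩ := Ideal.Quotient.mk_surjective H
  refine ⟨c, mt Ideal.Quotient.eq_zero_iff_mem.mpr hc, ?_⟩
  have hsub : Polynomial.C c - F * H ∈ J := Ideal.Quotient.eq.mp (hH.trans (map_mul _ F H).symm)
  rw [← add_sub_cancel (F * H) (Polynomial.C c)]
  exact Submodule.add_mem_sup (Ideal.mul_mem_right _ _ (Ideal.mem_span_singleton_self F)) hsub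

end PrimeOfPolynomialRing

section GenericPoints

open Filter Topology

variable {A B X Y : Type*} [CommRing A] [CommRing B] [TopologicalSpace X] [TopologicalSpace Y]

/-- Viewing the elements of `A` as functions on `X` through `ev`: for every prime `J` there is
`q ∉ J` such that each zero of `J` outside `Z(q)` is a limit of zeros of `J` outside `Z(q')`, for
every `q' ∉ J`. The witness `q` is independent of `q'`. -/
def HasDenseGenericPoints (ev : X → A →+* ℝ) : Prop :=
  ∀ (J : Ideal A) [J.IsPrime], ∃ q ∉ J, ∀ q' ∉ J, ∀ x, J ≤ RingHom.ker (ev x) → ev x q ≠ 0 →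
    x ∈ closure {y | J ≤ RingHom.ker (ev y) ∧ ev y q' ≠ 0}

lemma HasDenseGenericPoints.of_injective {ev : X → A →+* ℝ}
    (hev : ∀ x, Function.Injective (ev x)) : HasDenseGenericPoints ev := by
  refine fun J hJ => ⟨1, J.one_notMem, fun q' hq' x hx _ => subset_closure ⟨hx, ?_⟩⟩
  exact (map_ne_zero_iff _ (hev x)).mpr fun h => hq' (h ▸ J.zero_mem)

lemma HasDenseGenericPoints.of_equiv {evA : X → A →+* ℝ} {evB : Y → B →+* ℝ}
    (h : HasDenseGenericPoints evA) (e : B ≃+* A) (φ : X ≃ₜ Y)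
    (hφ : ∀ x b, evB (φ x) b = evA x (e b)) : HasDenseGenericPoints evB := by
  intro J hJ
  have hker (x : X) : J.comap e.symm ≤ RingHom.ker (evA x) ↔ J ≤ RingHom.ker (evB (φ x)) := by
    refine ⟨fun hle b hb => ?_, fun hle a ha => ?_⟩
    · rw [RingHom.mem_ker, hφ]
      exact hle (show e.symm (e b) ∈ J from (e.symm_apply_apply b).symm ▸ hb)
    · have : evB (φ x) (e.symm a) = 0 := hle ha
      rwa [hφ, e.apply_symm_apply] at this
  obtain ⟨q, hq, hclosure⟩ := h (J.comap e.symm)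
  refine ⟨e.symm q, hq, fun q' hq' y hy hqy => ?_⟩
  obtain ⟨x, rfl⟩ := φ.surjective y
  rw [hφ, e.apply_symm_apply] at hqy
  have hq'e : e q' ∉ J.comap e.symm := fun hmem =>
    hq' (e.symm_apply_apply q' ▸ (Ideal.mem_comap.mp hmem : e.symm (e q') ∈ J))
  refine map_mem_closure φ.continuous (hclosure _ hq'e x ((hker x).mpr hy) hqy) fun z hz => ?_
  exact ⟨(hker z).mp hz.1, by rw [hφ]; exact hz.2⟩

lemma mem_closure_prod_of_frequently {S : Set (X × Y)} {z : X × Y}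
    (h : ∀ W ∈ 𝓝 z.2, ∃ᶠ x in 𝓝 z.1, ∃ y ∈ W, (x, y) ∈ S) : z ∈ closure S := by
  refine mem_closure_iff_nhds.mpr fun t ht => ?_
  obtain ⟨U, hU, W, hW, hUW⟩ := mem_nhds_prod_iff.mp ht
  obtain ⟨x, ⟨y, hy, hS⟩, hx⟩ := ((h W hW).and_eventually hU).exists
  exact ⟨(x, y), hUW ⟨hx, hy⟩, hS⟩

lemma eventually_exists_eq_zero_of_hasDerivAt {Φ : X → ℝ → ℝ}
    (hΦ : Continuous (Function.uncurry Φ)) {x : X} {s d : ℝ} (hd : HasDerivAt (Φ x) d s)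
    (hd0 : d ≠ 0) (hzero : Φ x s = 0) {W : Set ℝ} (hW : W ∈ 𝓝 s) :
    ∀ᶠ y in 𝓝 x, ∃ t ∈ W, Φ y t = 0 := by
  obtain ⟨δ, hδ, hball⟩ := Metric.mem_nhds_iff.mp hW
  have hmem : Metric.ball s δ ∈ 𝓝 s := Metric.ball_mem_nhds s hδ
  obtain ⟨a, ha, hneg⟩ : ∃ a ∈ Metric.ball s δ, Φ x a < 0 := by
    by_contra! h
    have : IsLocalMin (Φ x) s := mem_of_superset hmem fun t ht => hzero.trans_le (h t ht)
    exact hd0 (this.hasDerivAt_eq_zero hd)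
  obtain ⟨b, hb, hpos⟩ : ∃ b ∈ Metric.ball s δ, 0 < Φ x b := by
    by_contra! h
    have : IsLocalMax (Φ x) s := mem_of_superset hmem fun t ht => (h t ht).trans_eq hzero.symm
    exact hd0 (this.hasDerivAt_eq_zero hd)
  have hsection (t : ℝ) : Continuous fun y => Φ y t := hΦ.uncurry_right t
  filter_upwards [((hsection a).tendsto x).eventually_lt_const hneg,
    ((hsection b).tendsto x).eventually_const_lt hpos] with y hya hyb
  obtain ⟨t, ht, hyt⟩ := (convex_ball s δ).isPreconnected.intermediate_value ha hb
    (hΦ.uncurry_left y).continuousOn ⟨hya.le, hyb.le⟩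
  exact ⟨t, hball ht, hyt⟩

variable {ev : X → A →+* ℝ}

open Polynomial in
lemma eval₂_eq_zero_of_mem_map_C {S : Type*} [CommRing S] {f : A →+* S} {J : Ideal A}
    (hJ : J ≤ RingHom.ker f) {F : A[X]} (hF : F ∈ J.map Polynomial.C) (s : S) :
    F.eval₂ f s = 0 := by
  have : F.map f = 0 := Polynomial.ext fun i => by
    rw [Polynomial.coeff_map, Polynomial.coeff_zero]
    exact hJ (Ideal.mem_map_C_iff.mp hF i)
  rw [← Polynomial.eval_map, this, Polynomial.eval_zero]

open Polynomial in
lemma under_le_ker {S : Type*} [CommRing S] {J : Ideal A[X]} {f : A →+* S} {s : S}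
    (h : J ≤ RingHom.ker (eval₂RingHom f s)) : J.under A ≤ RingHom.ker f := fun a ha => by
  simpa using h (show Polynomial.C a ∈ J from ha)

open Polynomial in
lemma mem_closure_of_le_map_C {J : Ideal A[X]} (hJ : J ≤ (J.under A).map Polynomial.C)
    {q' : A[X]} {i : ℕ} {z : X × ℝ}
    (hz : z.1 ∈ closure {x | J.under A ≤ RingHom.ker (ev x) ∧ ev x (q'.coeff i) ≠ 0}) :
    z ∈ closure {w | J ≤ RingHom.ker (eval₂RingHom (ev w.1) w.2) ∧
      eval₂RingHom (ev w.1) w.2 q' ≠ 0} := by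
  refine mem_closure_prod_of_frequently fun W hW =>
    (mem_closure_iff_frequently.mp hz).mono fun x ⟨hx, hqx⟩ => ?_
  have hmap : q'.map (ev x) ≠ 0 := fun h =>
    hqx (by rw [← Polynomial.coeff_map, h, Polynomial.coeff_zero])
  obtain ⟨s, hsW, hs⟩ := (infinite_of_mem_nhds z.2 hW).exists_notMem_finite
    (Polynomial.finite_setOfPred_isRoot hmap)
  refine ⟨s, hsW, fun F hF => eval₂_eq_zero_of_mem_map_C hx (hJ hF) s, ?_⟩
  rwa [coe_eval₂RingHom, ← Polynomial.eval_map]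

open Polynomial in
lemma continuous_eval₂_prod (hev : ∀ a, Continuous fun x => ev x a) (F : A[X]) :
    Continuous fun z : X × ℝ => F.eval₂ (ev z.1) z.2 := by
  simp only [Polynomial.eval₂_eq_sum_range]
  exact continuous_finsetSum _ fun i _ =>
    ((hev _).comp continuous_fst).mul (continuous_snd.pow i)

open Polynomial in
lemma mem_closure_of_derivative_ne_zero (hev : ∀ a, Continuous fun x => ev x a) {J : Ideal A[X]}
    {m q' : A[X]} {c : A} (hm : m ∈ J)
    (hdvd : ∀ F ∈ J, ∃ e : ℕ, Polynomial.C m.leadingCoeff ^ e * F ∈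
      Ideal.span {m} ⊔ (J.under A).map Polynomial.C)
    (hc : Polynomial.C c ∈ Ideal.span {q'} ⊔ J) {z : X × ℝ}
    (hzJ : J ≤ RingHom.ker (eval₂RingHom (ev z.1) z.2)) (hlc : ev z.1 m.leadingCoeff ≠ 0)
    (hder : m.derivative.eval₂ (ev z.1) z.2 ≠ 0)
    (hz : z.1 ∈ closure {x | J.under A ≤ RingHom.ker (ev x) ∧ ev x c ≠ 0}) :
    z ∈ closure {w | J ≤ RingHom.ker (eval₂RingHom (ev w.1) w.2) ∧
      eval₂RingHom (ev w.1) w.2 q' ≠ 0} := by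
  refine mem_closure_prod_of_frequently fun W hW => ?_
  have hroot : ∀ᶠ x in 𝓝 z.1, ∃ s ∈ W, m.eval₂ (ev x) s = 0 := by
    refine eventually_exists_eq_zero_of_hasDerivAt (Φ := fun x s => m.eval₂ (ev x) s)
      (continuous_eval₂_prod hev m) (d := m.derivative.eval₂ (ev z.1) z.2) ?_ hder (hzJ hm) hW
    simp only [← Polynomial.eval_map, ← Polynomial.derivative_map]
    exact Polynomial.hasDerivAt _ _
  refine ((mem_closure_iff_frequently.mp hz).and_eventually
    (hroot.and ((hev _).continuousAt.eventually_ne hlc))).mono ?_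
  rintro x ⟨⟨hx, hcx⟩, ⟨s, hsW, hms⟩, hlcx⟩
  have hJx : J ≤ RingHom.ker (eval₂RingHom (ev x) s) := fun F hF => by
    obtain ⟨e, he⟩ := hdvd F hF
    have hker : Ideal.span {m} ⊔ (J.under A).map Polynomial.C ≤
        RingHom.ker (eval₂RingHom (ev x) s) :=
      sup_le ((Ideal.span_singleton_le_iff_mem _).mpr hms) fun G hG =>
        eval₂_eq_zero_of_mem_map_C hx hG s
    have hmul := hker he
    rw [RingHom.mem_ker, map_mul, map_pow, coe_eval₂RingHom, Polynomial.eval₂_C] at hmul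
    exact (mul_eq_zero.mp hmul).resolve_left (pow_ne_zero e hlcx)
  refine ⟨s, hsW, hJx, fun hq' => hcx ?_⟩
  have hker : Ideal.span {q'} ⊔ J ≤ RingHom.ker (eval₂RingHom (ev x) s) :=
    sup_le ((Ideal.span_singleton_le_iff_mem _).mpr hq') hJx
  simpa using hker hc

open Polynomial in
lemma HasDenseGenericPoints.polynomial [Algebra ℚ A] (h : HasDenseGenericPoints ev)
    (hev : ∀ a, Continuous fun x => ev x a) :
    HasDenseGenericPoints fun z : X × ℝ => eval₂RingHom (ev z.1) z.2 := by
  intro J hJ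
  obtain ⟨q₀, hq₀, hclosure⟩ := h (J.under A)
  by_cases hmap : J ≤ (J.under A).map Polynomial.C
  · -- `J` is extended from `A`, so its zero locus is a union of lines.
    refine ⟨Polynomial.C q₀, hq₀, fun q' hq' z hz hqz => ?_⟩
    obtain ⟨i, hi⟩ : ∃ i, q'.coeff i ∉ J.under A := by
      by_contra! hall
      exact hq' (Ideal.map_comap_le (Ideal.mem_map_C_iff.mpr hall))
    exact mem_closure_of_le_map_C hmap
      (hclosure _ hi _ (under_le_ker hz) (by simpa using hqz))
  · -- Over generic points of `J.under A`, `J` is generated by `m`, whose simple roots persist.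
    obtain ⟨m, hm, hlc, hder, hdvd⟩ := exists_leadingCoeff_derivative_notMem hmap
    refine ⟨Polynomial.C q₀ * Polynomial.C m.leadingCoeff * m.derivative,
      hJ.mul_notMem (hJ.mul_notMem hq₀ hlc) hder, fun q' hq' z hz hqz => ?_⟩
    simp only [map_mul, mul_ne_zero_iff, coe_eval₂RingHom, Polynomial.eval₂_C] at hqz
    obtain ⟨⟨hq₀z, hlcz⟩, hderz⟩ := hqz
    obtain ⟨c, hc, hcmem⟩ := exists_notMem_under_C_mem_span_sup hmap hq'
    exact mem_closure_of_derivative_ne_zero hev hm hdvd hcmem hz hlcz hderz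
      (hclosure c hc _ (under_le_ker hz) hq₀z)

lemma hasDenseGenericPoints_eval (n : ℕ) :
    HasDenseGenericPoints fun x : Fin n → ℝ => eval x := by
  induction n with
  | zero =>
    refine .of_injective fun x p q h => funext fun y => ?_
    rwa [Subsingleton.elim y x]
  | succ n ih =>
    refine (ih.polynomial MvPolynomial.continuous_eval).of_equiv (finSuccEquiv ℝ n).toRingEquiv
      ((Homeomorph.prodComm _ _).trans (Fin.consEquivL ℝ fun _ => ℝ).toHomeomorph) fun z F => ?_
    exact (eval_eq_eval_mv_eval' z.1 z.2 F).trans (Polynomial.eval_map _ _)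

end GenericPoints

/-! ### Noetherianity of regulous zero sets -/

open Polynomial Filter Topology in
lemma coeff_eq_coeff_mul_of_eventually_eval {F : ℝ → ℝ} {c : ℝ}
    (hF : Tendsto F (𝓝[≠] 0) (𝓝 c)) {P Q : ℝ[X]}
    (h : ∀ᶠ s in 𝓝[≠] 0, Q.eval s * F s = P.eval s) {a : ℕ} (ha : ∀ i < a, Q.coeff i = 0) :
    P.coeff a = Q.coeff a * c := by
  have coeff_zero {P Q : ℝ[X]} (h : ∀ᶠ s in 𝓝[≠] 0, Q.eval s * F s = P.eval s) :
      P.coeff 0 = Q.coeff 0 * c := by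
    have htendsto (R : ℝ[X]) : Tendsto R.eval (𝓝[≠] 0) (𝓝 (R.coeff 0)) := by
      rw [R.coeff_zero_eq_eval_zero]
      exact R.continuous.continuousWithinAt
    exact tendsto_nhds_unique ((htendsto P).congr' (h.mono fun s hs => hs.symm))
      ((htendsto Q).mul hF)
  induction a generalizing P Q with
  | zero => exact coeff_zero h
  | succ a ih =>
    have hQ := Q.divX_mul_X_add
    have hP := P.divX_mul_X_add
    rw [ha 0 a.succ_pos, map_zero, add_zero] at hQ
    rw [coeff_zero h, ha 0 a.succ_pos, zero_mul, map_zero, add_zero] at hP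
    rw [← coeff_divX, ← coeff_divX]
    refine ih ?_ fun i hi => by rw [coeff_divX, ha _ (by omega)]
    filter_upwards [h, self_mem_nhdsWithin] with s hs hs0
    refine mul_right_cancel₀ hs0 ?_
    rw [← hQ, ← hP] at hs
    simpa [mul_right_comm] using hs

lemma mem_zeroLocus_iff_forall_eval {σ K : Type*} [Field K] {J : Ideal (MvPolynomial σ K)}
    {x : σ → K} : x ∈ zeroLocus K J ↔ ∀ F ∈ J, eval x F = 0 :=
  Iff.rfl

/-- The expansion of `F (x + s • v)` as a polynomial in `s` with coefficients polynomial in `x`. -/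
noncomputable def expandAlong {σ R : Type*} [CommSemiring R] (v : σ → R) :
    MvPolynomial σ R →ₐ[R] Polynomial (MvPolynomial σ R) :=
  aeval fun i => Polynomial.C (X i) + Polynomial.C (C (v i)) * Polynomial.X

lemma eval_map_expandAlong {σ R : Type*} [CommSemiring R] (v x : σ → R) (F : MvPolynomial σ R)
    (s : R) : ((expandAlong v F).map (eval x)).eval s = eval (x + s • v) F := by
  have : ((Polynomial.evalRingHom s).comp (Polynomial.mapRingHom (eval x))).comp
      (expandAlong v).toRingHom = eval (x + s • v) :=
    ringHom_ext (fun r => by simp [MvPolynomial.algebraMap_eq])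
      fun i => by simp [expandAlong, mul_comm (v i)]
  exact RingHom.congr_fun this F

open Filter Topology in
lemma exists_notMem_forall_mem_zeroLocus_eval_mul_eq {σ : Type*} {f : (σ → ℝ) → ℝ}
    (hf : Continuous f) {p q : MvPolynomial σ ℝ} (hq : q ≠ 0)
    (h : ∀ x, eval x q * f x = eval x p) {J : Ideal (MvPolynomial σ ℝ)}
    (hJ : (zeroLocus ℝ J).Nonempty) :
    ∃ p' q', q' ∉ J ∧ ∀ x ∈ zeroLocus ℝ J, eval x q' * f x = eval x p' := by
  -- As `q` may lie in `J`, compare on lines parallel to one on which `q` is nonzero: `q'` is the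
  -- first coefficient of `s ↦ q (x + s • v)` outside `J`.
  classical
  obtain ⟨x₀, hx₀⟩ := hJ
  obtain ⟨w, hw⟩ : ∃ w, eval w q ≠ 0 := by
    by_contra! hq0
    exact hq (MvPolynomial.funext fun x => by simp [hq0 x])
  have hcoeff : ∃ i, (expandAlong (w - x₀) q).coeff i ∉ J := by
    by_contra! hmem
    have hzero : (expandAlong (w - x₀) q).map (eval x₀) = 0 := by
      ext i
      rw [Polynomial.coeff_map, Polynomial.coeff_zero]
      exact mem_zeroLocus_iff_forall_eval.mp hx₀ _ (hmem i)
    simpa [hzero, hw.symm] using eval_map_expandAlong (w - x₀) x₀ q 1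
  refine ⟨(expandAlong (w - x₀) p).coeff (Nat.find hcoeff), _, Nat.find_spec hcoeff, fun x hx => ?_⟩
  have hlim : Tendsto (fun s : ℝ => f (x + s • (w - x₀))) (𝓝[≠] 0) (𝓝 (f x)) := by
    have : Continuous fun s : ℝ => f (x + s • (w - x₀)) := by fun_prop
    simpa using (this.tendsto 0).mono_left nhdsWithin_le_nhds
  simp only [← Polynomial.coeff_map]
  refine (coeff_eq_coeff_mul_of_eventually_eval hlim (.of_forall fun s => ?_) fun i hi => ?_).symm
  · rw [eval_map_expandAlong, eval_map_expandAlong, h]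
  · rw [Polynomial.coeff_map]
    exact mem_zeroLocus_iff_forall_eval.mp hx _ (not_not.mp (Nat.find_min hcoeff hi))

lemma mem_zeroLocus_sup_span_singleton {σ K : Type*} [Field K] {J : Ideal (MvPolynomial σ K)}
    {a : MvPolynomial σ K} {x : σ → K} :
    x ∈ zeroLocus K (J ⊔ Ideal.span {a}) ↔ x ∈ zeroLocus K J ∧ eval x a = 0 :=
  (sup_le_iff (c := RingHom.ker (eval x))).trans <|
    and_congr_right' (Ideal.span_singleton_le_iff_mem _)

/-- On `V`, the common zeros of the family `f` are those of a finite subfamily. -/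
def FinitelyCutOutOn {ι X : Type*} (f : ι → X → ℝ) (V : Set X) : Prop :=
  ∃ t : Finset ι, ∀ x ∈ V, (∀ i ∈ t, f i x = 0) → ∀ i, f i x = 0

namespace FinitelyCutOutOn

variable {ι X : Type*} {f : ι → X → ℝ} {V W : Set X}

lemma of_forall_eq_zero (h : ∀ x ∈ V, ∀ i, f i x = 0) : FinitelyCutOutOn f V :=
  ⟨∅, fun x hx _ => h x hx⟩

lemma mono (hW : FinitelyCutOutOn f W) (h : V ⊆ W) : FinitelyCutOutOn f V :=
  hW.imp fun _ ht x hx => ht x (h hx)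

lemma union (hV : FinitelyCutOutOn f V) (hW : FinitelyCutOutOn f W) :
    FinitelyCutOutOn f (V ∪ W) := by
  classical
  obtain ⟨s, hs⟩ := hV
  obtain ⟨t, ht⟩ := hW
  refine ⟨s ∪ t, fun x hx h => hx.elim (fun hV => hs x hV ?_) fun hW => ht x hW ?_⟩
  · exact fun i hi => h i (Finset.mem_union_left t hi)
  · exact fun i hi => h i (Finset.mem_union_right s hi)

lemma of_inter_zero {i : ι} (h : FinitelyCutOutOn f (V ∩ {x | f i x = 0})) :
    FinitelyCutOutOn f V := by
  classical
  obtain ⟨t, ht⟩ := h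
  refine ⟨insert i t, fun x hx hzero => ht x ⟨hx, hzero i (Finset.mem_insert_self i t)⟩ ?_⟩
  exact fun j hj => hzero j (Finset.mem_insert_of_mem hj)

end FinitelyCutOutOn

lemma IsRegulous.finitelyCutOutOn_zeroLocus_of_isPrime {n k : ℕ} {ι : Type*}
    {f : ι → (Fin n → ℝ) → ℝ} (hf : ∀ i, IsRegulous n k (f i))
    {J : Ideal (MvPolynomial (Fin n) ℝ)} [J.IsPrime]
    (ih : ∀ a ∉ J, FinitelyCutOutOn f (zeroLocus ℝ J ∩ {x | eval x a = 0})) :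
    FinitelyCutOutOn f (zeroLocus ℝ J) := by
  rcases (zeroLocus ℝ J).eq_empty_or_nonempty with hV | hV
  · exact .of_forall_eq_zero (by simp [hV])
  have hrat (i : ι) : ∃ p q, q ∉ J ∧ ∀ x ∈ zeroLocus ℝ J, eval x q * f i x = eval x p := by
    obtain ⟨hfC, p, q, hq, h⟩ := hf i
    exact exists_notMem_forall_mem_zeroLocus_eval_mul_eq hfC.continuous hq h hV
  choose p q hq hpq using hrat
  by_cases hp : ∀ i, p i ∈ J
  · obtain ⟨q₀, hq₀, hclosure⟩ := hasDenseGenericPoints_eval n J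
    have hgeneric : FinitelyCutOutOn f {x ∈ zeroLocus ℝ J | eval x q₀ ≠ 0} := by
      refine .of_forall_eq_zero fun x hx i => ?_
      refine closure_minimal ?_ (isClosed_eq (hf i).1.continuous continuous_const)
        (hclosure (q i) (hq i) x hx.1 hx.2)
      rintro y ⟨hy, hqy⟩
      have := hpq i y hy
      rw [mem_zeroLocus_iff_forall_eval.mp hy _ (hp i)] at this
      exact (mul_eq_zero.mp this).resolve_left hqy
    refine ((ih q₀ hq₀).union hgeneric).mono fun x hx => ?_
    exact (em (eval x q₀ = 0)).imp (⟨hx, ·⟩) (⟨hx, ·⟩)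
  · push Not at hp
    obtain ⟨i, hi⟩ := hp
    refine .of_inter_zero (i := i) ((ih _ hi).mono fun x ⟨hx, (hfx : f i x = 0)⟩ => ⟨hx, ?_⟩)
    rw [Set.mem_ofPred_eq, ← hpq i x hx, hfx, mul_zero]

lemma IsRegulous.finitelyCutOutOn_zeroLocus {n k : ℕ} {ι : Type*} {f : ι → (Fin n → ℝ) → ℝ}
    (hf : ∀ i, IsRegulous n k (f i)) (J : Ideal (MvPolynomial (Fin n) ℝ)) :
    FinitelyCutOutOn f (zeroLocus ℝ J) := by
  induction J using WellFoundedGT.induction with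
  | ind J ih =>
  have hcut : ∀ a ∉ J, FinitelyCutOutOn f (zeroLocus ℝ J ∩ {x | eval x a = 0}) := fun a ha =>
    (ih (J ⊔ Ideal.span {a}) (Submodule.lt_sup_iff_notMem.mpr ha)).mono
      fun x hx => mem_zeroLocus_sup_span_singleton.mpr hx
  by_cases hJ : J.IsPrime
  · exact finitelyCutOutOn_zeroLocus_of_isPrime hf hcut
  rcases Ideal.not_isPrime_iff.mp hJ with rfl | ⟨a, ha, b, hb, hab⟩
  · exact .of_forall_eq_zero (by simp)
  refine ((hcut a ha).union (hcut b hb)).mono fun x hx => ?_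
  have : eval x a * eval x b = 0 := by
    rw [← map_mul]
    exact mem_zeroLocus_iff_forall_eval.mp hx _ hab
  exact (mul_eq_zero.mp this).imp (⟨hx, ·⟩) (⟨hx, ·⟩)

lemma exists_mem_forall_eq_zero {n k : ℕ} (I : Ideal (regulousRing n k)) :
    ∃ f ∈ I, ∀ x, (f : (Fin n → ℝ) → ℝ) x = 0 → ∀ g ∈ I, (g : (Fin n → ℝ) → ℝ) x = 0 := by
  obtain ⟨t, ht⟩ := IsRegulous.finitelyCutOutOn_zeroLocus
    (f := fun g : I => ((g : regulousRing n k) : (Fin n → ℝ) → ℝ)) (fun g => g.1.2) ⊥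
  refine ⟨∑ g ∈ t, g * g, sum_mem fun g _ => I.mul_mem_left _ g.2, fun x hx g hg => ?_⟩
  have hsum : ∑ g ∈ t, (g : (Fin n → ℝ) → ℝ) x * (g : (Fin n → ℝ) → ℝ) x = 0 := by
    simpa using hx
  rw [Finset.sum_mul_self_eq_zero_iff] at hsum
  exact ht x (by simp) hsum ⟨g, hg⟩

/-- **Regulous functions, Théorème `thmradprinc`**: the ring `R^k(ℝⁿ)` is radically
principal: every ideal `I` contains a function `f` with `Z(f) = Z(I)` and
`Rad (f) = Rad I`. -/
theorem regulous_radically_principal (n k : ℕ) (I : Ideal (regulousRing n k)) :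
    ∃ f ∈ I,
      ({x : Fin n → ℝ | (f : (Fin n → ℝ) → ℝ) x = 0} =
        ⋂ g ∈ I, {x : Fin n → ℝ | (g : (Fin n → ℝ) → ℝ) x = 0}) ∧
      (Ideal.span {f}).radical = I.radical := by
  obtain ⟨f, hfI, hzero⟩ := exists_mem_forall_eq_zero I
  refine ⟨f, hfI, Set.ext fun x => ?_, le_antisymm ?_ ?_⟩
  · simp only [Set.mem_iInter]
    exact ⟨hzero x, fun h => h f hfI⟩
  · exact Ideal.radical_mono ((Ideal.span_singleton_le_iff_mem I).mpr hfI)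
  · refine Ideal.radical_le_radical_iff.mpr fun g hg => ?_
    obtain ⟨N, h, hh, hgN⟩ := IsRegulous.exists_pow_eq_mul f.2 g.2 (hzero · · g hg)
    exact ⟨N, Ideal.mem_span_singleton'.mpr ⟨⟨h, hh⟩, Subtype.ext hgN.symm⟩⟩
end
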